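/- arXiv:1203.4376 — 13 statements merged into one kernel-verified Lean document; each statement's English description precedes it below -/
import Mathlib

section
/- Let m ≥ 1 and let e₁, …, e_{2m} ∈ {−1, 1} with e₁ = 1, and suppose the sequence of sign changes is palindromic, i.e. e_k·e_{k+1} = e_{2m−k}·e_{2m−k+1} for all k = 1, …, 2m−1. Let p, q be the numerator and denominator of the continued fraction [e₁, 2e₂, e₃, 2e₄, …, e_{2m−1}, 2e_{2m}]. Then p divides q² − 2 or p divides q² + 2 (i.e. q² ≡ ±2 (mod p)). -/
/-!
Write `M = [[p, p'], [q, q']]` for the matrix product. Palindromic sign changes together with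
`e 0 = 1` mean that the signs themselves satisfy `e (2m - 1 - j) = c * e j` with a constant
`c = e (2m - 1) = ±1`. The factors are symmetric, so `Mᵀ` is the matrix of the reversed sequence
`2c e 0, c e 1, 2c e 2, c e 3, …` (the reversal swaps the parities of the positions), and this matrix
is also conjugate to `M` by `diag(2, c)` (`diag_mul_cfProd`). Comparing entries in
`diag(2, c) * M = Mᵀ * diag(2, c)` gives `2p' = cq`. As `M` has an even number of factors of
determinant `-1`, `pq' - p'q = 1`, hence `2pq' = 2 + cq²`, so `p ∣ q² + 2c`.
-/

open Matrix

def cfMat (a : ℤ) : Matrix (Fin 2) (Fin 2) ℤ := !![a, 1; 1, 0]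

def cfProd (l : List ℤ) : Matrix (Fin 2) (Fin 2) ℤ := (l.map cfMat).prod

def cfNum (l : List ℤ) : ℤ := cfProd l 0 0

def cfDen (l : List ℤ) : ℤ := cfProd l 1 0

lemma cfProd_append (l l' : List ℤ) : cfProd (l ++ l') = cfProd l * cfProd l' := by
  simp [cfProd]

lemma cfProd_transpose (l : List ℤ) : (cfProd l)ᵀ = cfProd l.reverse := by
  have h (a : ℤ) : (cfMat a)ᵀ = cfMat a := by
    ext i j; fin_cases i <;> fin_cases j <;> simp [cfMat]
  simp only [cfProd, Matrix.transpose_list_prod, List.map_map, List.map_reverse]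
  congr 3
  funext a
  exact h a

lemma cfProd_det (l : List ℤ) : (cfProd l).det = (-1) ^ l.length := by
  induction l with
  | nil => simp [cfProd]
  | cons a l ih =>
    have : cfProd (a :: l) = cfMat a * cfProd l := by simp [cfProd]
    rw [this, Matrix.det_mul, ih, List.length_cons, pow_succ']
    simp [cfMat, Matrix.det_fin_two]

/-- Moving the coefficients `2` from the odd to the even positions and multiplying all partial
quotients by a sign `c` amounts to conjugation by `diag(2, c)`. -/
lemma diag_mul_cfProd (e : ℕ → ℤ) (c : ℤ) (hc : c * c = 1) (m : ℕ) :
    !![2, 0; 0, c] * cfProd ((List.range (2 * m)).map (fun j => if j % 2 = 0 then e j else 2 * e j))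
    = cfProd ((List.range (2 * m)).map
        (fun j => if j % 2 = 0 then 2 * (c * e j) else c * e j)) * !![2, 0; 0, c] := by
  induction m with
  | zero => simp [cfProd]
  | succ m ih =>
    have h2 : 2 * (m + 1) = 2 * m + 1 + 1 := by ring
    have h0 : (2 * m) % 2 = 0 := by omega
    have h1 : (2 * m + 1) % 2 ≠ 0 := by omega
    simp only [h2, List.range_succ, List.map_append, cfProd_append, List.map_cons, List.map_nil,
      if_pos h0, if_neg h1]
    have key (a b : ℤ) : !![2, 0; 0, c] * (cfProd [a] * cfProd [2 * b])
        = cfProd [2 * (c * a)] * cfProd [c * b] * !![2, 0; 0, c] := by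
      ext i j
      fin_cases i <;> fin_cases j <;> simp [cfProd, cfMat, Matrix.mul_apply, Fin.sum_univ_two]
      · linear_combination (-4 * a * b) * hc
      · linear_combination (-2 * a) * hc
      · ring
    rw [Matrix.mul_assoc (cfProd _), ← Matrix.mul_assoc, ih, Matrix.mul_assoc, key]
    simp only [Matrix.mul_assoc]

theorem stmt2 (m : ℕ) (hm : 1 ≤ m) (e : ℕ → ℤ)
    (he : ∀ i < 2 * m, e i = 1 ∨ e i = -1)
    (he0 : e 0 = 1)
    (hpal : ∀ j, j + 1 < 2 * m →
      e j * e (j + 1) = e (2 * m - j - 2) * e (2 * m - j - 1))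
    (l : List ℤ)
    (hl : l = (List.range (2 * m)).map (fun j => if j % 2 = 0 then e j else 2 * e j)) :
    cfNum l ∣ (cfDen l) ^ 2 - 2 ∨ cfNum l ∣ (cfDen l) ^ 2 + 2 := by
  have hsq (i : ℕ) (hi : i < 2 * m) : e i * e i = 1 := by
    rcases he i hi with h | h <;> simp [h]
  obtain ⟨c, hcdef⟩ : ∃ c, c = e (2 * m - 1) := ⟨_, rfl⟩
  have hc : c * c = 1 := by rw [hcdef]; exact hsq _ (by omega)
  have hrev : ∀ j, j < 2 * m → e (2 * m - 1 - j) = c * e j := by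
    intro j
    induction j with
    | zero => intro _; simp [he0, hcdef]
    | succ j ih =>
      intro hj
      have h1 := ih (by omega)
      have h2 := hpal j hj
      rw [show 2 * m - j - 2 = 2 * m - 1 - (j + 1) by omega,
        show 2 * m - j - 1 = 2 * m - 1 - j by omega, h1] at h2
      have h3 := hsq j (by omega)
      -- `h2` reads `e j * e (j + 1) = e (2m - 1 - (j + 1)) * (c * e j)`; multiply it by `c * e j`.
      linear_combination (-c * e j) * h2 + (c * e (j + 1) - e (2 * m - 1 - (j + 1)) * c * c) * h3
        - e (2 * m - 1 - (j + 1)) * hc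
  have hlist : l.reverse = (List.range (2 * m)).map
      (fun j => if j % 2 = 0 then 2 * (c * e j) else c * e j) := by
    subst hl
    apply List.ext_getElem
    · simp
    · intro j h1 h2
      have hj : j < 2 * m := by simpa using h2
      simp only [List.getElem_reverse, List.getElem_map, List.getElem_range, List.length_map,
        List.length_range, hrev j hj]
      by_cases hp : j % 2 = 0
      · rw [if_neg (by omega), if_pos hp]
      · rw [if_pos (by omega), if_neg hp]
  have hconj := diag_mul_cfProd e c hc m
  rw [← hlist, ← hl, ← cfProd_transpose] at hconj
  have h01 := congrFun (congrFun hconj 0) 1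
  simp [Matrix.mul_apply, Fin.sum_univ_two] at h01
  have hdet := cfProd_det l
  have hlen : l.length = 2 * m := by simp [hl]
  rw [hlen, pow_mul, Matrix.det_fin_two] at hdet
  norm_num at hdet
  unfold cfNum cfDen
  rcases he (2 * m - 1) (by omega) with h | h
  · right
    rw [← hcdef] at h
    subst h
    exact ⟨2 * cfProd l 1 1, by linear_combination (-2) * hdet - cfProd l 1 0 * h01⟩
  · left
    rw [← hcdef] at h
    subst h
    exact ⟨-2 * cfProd l 1 1, by linear_combination 2 * hdet + cfProd l 1 0 * h01⟩
end

section
/- Let A = [[1,1],[1,0]], B = [[2,1],[1,0]], S = [[1,0],[0,−1]] be 2×2 rational matrices. Let X₁, …, Xₙ be a word in {A, B, S} with X₁ = A and Xₙ = B, containing no factor AA, BB, SS, ASA, or BSB (i.e., no index i with (Xᵢ, X_{i+1}) ∈ {(A,A),(B,B),(S,S)} and no index i with (Xᵢ, X_{i+1}, X_{i+2}) ∈ {(A,S,A),(B,S,B)}), and such that the positions of S are palindromic: Xᵢ = S implies X_{n+1−i} = S. Then the product P = X₁X₂⋯Xₙ, written P = [[a,b],[c,d]], satisfies c = 2b (equivalently,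 τ(P) = P where τ([[a,b],[c,d]]) = [[a, c/2],[2b, d]]). -/
/-!
The word is peeled from both ends at once. Deleting the letters `S`, the word alternates between
`A` and `B`, so it starts with `A`, ends with `B`, and the letters at mirror positions are always
`(A, B)`, `(B, A)` or `(S, S)`. Call a matrix `W` of type `false` if `W 1 0 = 2 * W 0 1` and of
type `true` if `W 0 1 = 2 * W 1 0`. A direct computation shows that `W ↦ A * W * B` sends type
`true` to type `false`, that `W ↦ B * W * A` sends type `false` to type `true`, and that
`W ↦ S * W * S` preserves both types; moreover `1` and `S` have both types. The exclusion of the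
factors `AA`, `BB`, `ASA`, `BSB` prevents the middle letter of a word of odd length from being
`A` or `B`, so induction from the middle outwards gives the claim.
-/

/-- The two letters other than `S`: `letter true` is `A` and `letter false` is `B`. -/
def letter (b : Bool) : Matrix (Fin 2) (Fin 2) ℚ :=
  if b then !![1, 1; 1, 0] else !![2, 1; 1, 0]

/-- The letter `S`. -/
def letterS : Matrix (Fin 2) (Fin 2) ℚ := !![1, 0; 0, -1]

/-- The linear condition satisfied by the product of a central segment whose nearest outer letter
different from `S` is `letter b` on the left and `letter (!b)` on the right. -/
def OfType (b : Bool) (W : Matrix (Fin 2) (Fin 2) ℚ) : Prop :=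
  if b then W 0 1 = 2 * W 1 0 else W 1 0 = 2 * W 0 1

/-- The product of the `m` consecutive letters of `X` starting at position `i`. -/
def seg (X : ℕ → Matrix (Fin 2) (Fin 2) ℚ) (i m : ℕ) : Matrix (Fin 2) (Fin 2) ℚ :=
  ((List.range m).map fun j => X (i + j)).prod

lemma seg_add_two (X : ℕ → Matrix (Fin 2) (Fin 2) ℚ) (i m : ℕ) :
    seg X i (m + 2) = X i * seg X (i + 1) m * X (i + m + 1) := by
  unfold seg
  rw [List.range_succ, List.range_succ_eq_map]
  simp [Function.comp_def, add_assoc, Nat.add_comm 1, mul_assoc]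

lemma letter_ne_letterS (b : Bool) : letter b ≠ letterS := by
  intro h
  have := congrFun (congrFun h 0) 1
  cases b <;> simp [letter, letterS] at this

lemma letter_not_ne (b : Bool) : letter (!b) ≠ letter b := by
  intro h
  have := congrFun (congrFun h 0) 0
  cases b <;> simp [letter] at this

lemma ofType_one (b : Bool) : OfType b 1 := by
  cases b <;> simp [OfType]

lemma ofType_letterS (b : Bool) : OfType b letterS := by
  cases b <;> simp [OfType, letterS]

lemma ofType_conj_letterS {b : Bool} {W : Matrix (Fin 2) (Fin 2) ℚ} (h : OfType b W) :
    OfType b (letterS * W * letterS) := by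
  rw [Matrix.eta_fin_two W] at h ⊢
  cases b <;> simp [OfType, letterS] at h ⊢ <;> linarith

lemma ofType_letter_mul {b : Bool} {W : Matrix (Fin 2) (Fin 2) ℚ} (h : OfType (!b) W) :
    OfType b (letter (!b) * W * letter b) := by
  rw [Matrix.eta_fin_two W] at h ⊢
  cases b <;> simp [OfType, letter] at h ⊢ <;> linarith

/-- Outward induction step and base cases combined: the central segment of length `m` starting at
position `i` has type `b` as soon as the nearest outer letters different from `S` are `letter b`
and `letter (!b)`, either both adjacent to the segment or both separated from it by one `S`. -/
lemma ofType_seg (n : ℕ) (X : ℕ → Matrix (Fin 2) (Fin 2) ℚ)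
    (hX : ∀ i < n, X i = letterS ∨ ∃ b, X i = letter b)
    (hpair : ∀ i, i + 1 < n → X i ≠ X (i + 1))
    (htriple : ∀ i b, i + 2 < n → X i = letter b → X (i + 1) = letterS → X (i + 2) ≠ letter b)
    (hpal : ∀ i < n, X i = letterS → X (n - 1 - i) = letterS) (m : ℕ) :
    ∀ (i : ℕ) (b : Bool), 2 * i + m = n →
      ((∃ k, i = k + 1 ∧ X k = letter b ∧ X (i + m) = letter (!b)) ∨
        ∃ k, i = k + 2 ∧ X k = letter b ∧ X (k + 1) = letterS ∧
          X (i + m) = letterS ∧ X (i + m + 1) = letter (!b)) →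
      OfType b (seg X i m) := by
  induction m using Nat.strong_induction_on with
  | _ m ih =>
  intro i b hn hc
  rcases Nat.eq_zero_or_pos m with rfl | hm
  · simpa [seg] using ofType_one b
  have hi : 1 ≤ i := by rcases hc with ⟨k, hk, -⟩ | ⟨k, hk, -⟩ <;> omega
  have hl : X i ≠ letter b := by
    rcases hc with ⟨k, rfl, h1, -⟩ | ⟨k, rfl, h1, h2, -⟩
    · intro h
      exact hpair k (by omega) (h1.trans h.symm)
    · exact htriple k b (by omega) h1 h2
  obtain ⟨p, rfl⟩ : ∃ p, m = p + 1 := ⟨m - 1, by omega⟩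
  have hr : X (i + p) ≠ letter (!b) := by
    rcases hc with ⟨k, hk, -, h1⟩ | ⟨k, hk, -, -, h1, h2⟩
    · intro h
      exact hpair (i + p) (by omega) (h.trans h1.symm)
    · intro h
      exact htriple (i + p) (!b) (by omega) h h1 h2
  have hbool : ∀ c : Bool, c = b ∨ c = !b := by cases b <;> decide
  have hl' : X i = letterS ∨ X i = letter (!b) := by
    rcases hX i (by omega) with h | ⟨c, h⟩
    · exact Or.inl h
    · rcases hbool c with rfl | rfl
      · exact absurd h hl
      · exact Or.inr h
  have hr' : X (i + p) = letterS ∨ X (i + p) = letter b := by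
    rcases hX (i + p) (by omega) with h | ⟨c, h⟩
    · exact Or.inl h
    · rcases hbool c with rfl | rfl
      · exact Or.inr h
      · exact absurd h hr
  have hlr : X i = letterS → X (i + p) = letterS := by
    intro h
    have := hpal i (by omega) h
    rwa [show n - 1 - i = i + p by omega] at this
  have hrl : X (i + p) = letterS → X i = letterS := by
    intro h
    have := hpal (i + p) (by omega) h
    rwa [show n - 1 - (i + p) = i by omega] at this
  -- For `m = 1` the middle letter can be neither `letter b` nor `letter (!b)`.
  rcases p with _ | p
  · have h : X i = letterS := by
      rcases hl' with h | h
      · exact h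
      · exact absurd h hr
    simpa [seg, h] using ofType_letterS b
  · rw [seg_add_two]
    rcases hl' with h | h
    · have h' := hlr h
      rw [h, show i + p + 1 = i + (p + 1) by omega, h']
      refine ofType_conj_letterS (ih p (by omega) (i + 1) b (by omega) (Or.inr ?_))
      rcases hc with ⟨k, rfl, h1, h2⟩ | ⟨k, rfl, h1, h2, -⟩
      · refine ⟨k, rfl, h1, h, ?_, ?_⟩
        · rw [← h']; congr 1; omega
        · rw [← h2]; congr 1; omega
      · exact absurd (h2.trans h.symm) (hpair (k + 1) (by omega))
    · have h' : X (i + (p + 1)) = letter b := by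
        rcases hr' with h' | h'
        · exact absurd (h.symm.trans (hrl h')) (letter_ne_letterS _)
        · exact h'
      rw [h, show i + p + 1 = i + (p + 1) by omega, h']
      refine ofType_letter_mul (ih p (by omega) (i + 1) (!b) (by omega) (Or.inl ?_))
      refine ⟨i, rfl, h, ?_⟩
      rw [Bool.not_not, ← h']; congr 1; omega

theorem stmt3 (n : ℕ) (hn : 1 ≤ n) (X : ℕ → Matrix (Fin 2) (Fin 2) ℚ)
    (A B S : Matrix (Fin 2) (Fin 2) ℚ)
    (hA : A = !![1, 1; 1, 0]) (hB : B = !![2, 1; 1, 0]) (hS : S = !![1, 0; 0, -1])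
    (hX : ∀ i < n, X i = A ∨ X i = B ∨ X i = S)
    (hfirst : X 0 = A) (hlast : X (n - 1) = B)
    (hpair : ∀ i, i + 1 < n →
      ¬((X i = A ∧ X (i + 1) = A) ∨ (X i = B ∧ X (i + 1) = B) ∨
        (X i = S ∧ X (i + 1) = S)))
    (htriple : ∀ i, i + 2 < n →
      ¬((X i = A ∧ X (i + 1) = S ∧ X (i + 2) = A) ∨
        (X i = B ∧ X (i + 1) = S ∧ X (i + 2) = B)))
    (hpal : ∀ i < n, X i = S → X (n - 1 - i) = S)
    (P : Matrix (Fin 2) (Fin 2) ℚ)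
    (hP : P = ((List.range n).map X).prod) :
    P 1 0 = 2 * P 0 1 := by
  obtain rfl : A = letter true := by simp [hA, letter]
  obtain rfl : B = letter false := by simp [hB, letter]
  obtain rfl : S = letterS := by simp [hS, letterS]
  have hP' : P = seg X 0 n := by simp [hP, seg]
  obtain ⟨m, rfl⟩ : ∃ m, n = m + 2 := by
    refine ⟨n - 2, ?_⟩
    by_contra hne
    obtain rfl : n = 1 := by omega
    exact letter_not_ne true (hlast.symm.trans hfirst)
  have hlast' : X (m + 1) = letter false := hlast
  have key : OfType true (seg X 1 m) := by
    refine ofType_seg (m + 2) X ?_ ?_ ?_ hpal m 1 true (by omega)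
      (Or.inl ⟨0, rfl, hfirst, by rw [add_comm]; exact hlast'⟩)
    · intro i hi
      rcases hX i hi with h | h | h
      · exact Or.inr ⟨_, h⟩
      · exact Or.inr ⟨_, h⟩
      · exact Or.inl h
    · intro i hi h
      apply hpair i hi
      rw [← h]
      simpa using hX i (by omega)
    · intro i b hi h1 h2 h3
      apply htriple i hi
      cases b
      · exact Or.inr ⟨h1, h2, h3⟩
      · exact Or.inl ⟨h1, h2, h3⟩
  have := ofType_letter_mul (b := false) key
  rw [hP', seg_add_two, hfirst, Nat.zero_add, Nat.zero_add, hlast']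
  simpa [OfType] using this
end

section
/- Let a and b be coprime positive integers and let s, t be distinct real numbers. Then T_a(s) = T_a(t) and T_b(s) = T_b(t) hold simultaneously if and only if there exist positive integers h, k with k/a + h/b < 1 such that {s, t} = {cos((k/a + h/b)π), cos((k/a − h/b)π)}. -/
/-!
For `s = cos α` and `t = cos β` with `0 ≤ β < α ≤ π`, put `u = (α + β) / 2` and `v = (α - β) / 2`.
Since `cos (n α) - cos (n β) = -2 sin (n u) sin (n v)`, the equality `T_n(s) = T_n(t)` says that
`n u` or `n v` is a multiple of `π` (`T_eval_cos_eq_iff`). Both `u` and `v` lie in `(0, π)`, and for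
coprime `a`, `b` no `x` in this interval has both `a x` and `b x` in `π ℤ`
(`not_sin_eq_zero_of_coprime`). So one of `u`, `v` is `k π / a` and the other `h π / b`, which gives
`{α, β} = {(k / a + h / b) π, ± (k / a - h / b) π}`; the boundary case `k / a + h / b = 1` is again
excluded by coprimality.

If `s` or `t` lies outside `[-1, 1]`, then `|T_n(x)| = cosh (n arcosh |x|)` forces `|s| = |t| > 1`,
hence `t = -s`. One of `a`, `b` is odd and its Chebyshev polynomial is odd, so it vanishes at `s`,
which contradicts `|T_n(s)| > 1`.
-/

open Polynomial Real

lemma T_eval_cos_eq_iff (n : ℕ) (u v : ℝ) :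
    (Polynomial.Chebyshev.T ℝ n).eval (cos (u + v)) =
      (Polynomial.Chebyshev.T ℝ n).eval (cos (u - v)) ↔ sin (n * u) = 0 ∨ sin (n * v) = 0 := by
  rw [Polynomial.Chebyshev.T_real_cos, Polynomial.Chebyshev.T_real_cos, ← sub_eq_zero,
    cos_sub_cos]
  have h1 : (((n : ℤ) : ℝ) * (u + v) + ((n : ℤ) : ℝ) * (u - v)) / 2 = n * u := by
    push_cast; ring
  have h2 : (((n : ℤ) : ℝ) * (u + v) - ((n : ℤ) : ℝ) * (u - v)) / 2 = n * v := by
    push_cast; ring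
  rw [h1, h2]
  simp

lemma not_sin_eq_zero_of_coprime {a b : ℕ} (ha : 0 < a) (hcop : Nat.Coprime a b) {x : ℝ}
    (hx0 : 0 < x) (hxpi : x < π) (h1 : sin (a * x) = 0) (h2 : sin (b * x) = 0) : False := by
  obtain ⟨k, hk⟩ := sin_eq_zero_iff.1 h1
  obtain ⟨h, hh⟩ := sin_eq_zero_iff.1 h2
  have ha' : (0 : ℝ) < a := by exact_mod_cast ha
  have e : (k : ℝ) * b = h * a := by
    have : ((k : ℝ) * b) * π = (h * a) * π := by linear_combination b * hk - a * hh
    exact mul_right_cancel₀ pi_ne_zero this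
  have e' : k * (b : ℤ) = h * a := by exact_mod_cast e
  have hd : (a : ℤ) ∣ k :=
    (Nat.isCoprime_iff_coprime.2 hcop).dvd_of_dvd_mul_right ⟨h, by rw [e']; ring⟩
  obtain ⟨m, rfl⟩ := hd
  have hm : (m : ℝ) * π = x := by
    apply mul_left_cancel₀ ha'.ne'
    rw [← hk]; push_cast; ring
  have m0 : (0 : ℝ) < m := by
    by_contra! hc
    nlinarith [pi_pos]
  have m1 : (m : ℝ) < 1 := by
    by_contra! hc
    nlinarith [pi_pos]
  have m0' : 0 < m := by exact_mod_cast m0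
  have m1' : m < 1 := by exact_mod_cast m1
  omega

lemma exists_nat_of_sin_eq_zero {a : ℕ} (ha : 0 < a) {x : ℝ} (hx : 0 < x)
    (h : sin (a * x) = 0) : ∃ k : ℕ, 0 < k ∧ x = (k : ℝ) / a * π := by
  obtain ⟨k, hk⟩ := sin_eq_zero_iff.1 h
  have ha' : (0 : ℝ) < a := by exact_mod_cast ha
  have k0 : (0 : ℝ) < k := by
    by_contra! hc
    nlinarith [pi_pos, mul_pos ha' hx]
  have k0' : 0 < k := by exact_mod_cast k0
  lift k to ℕ using k0'.le
  refine ⟨k, by exact_mod_cast k0', ?_⟩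
  push_cast at hk
  field_simp
  linarith

lemma div_add_div_ne_one {a b h k : ℕ} (ha : 0 < a) (hb : 0 < b) (hcop : Nat.Coprime a b)
    (hh : 0 < h) (hk : 0 < k) : (k : ℝ) / a + (h : ℝ) / b ≠ 1 := by
  intro e
  have ha' : (0 : ℝ) < a := by exact_mod_cast ha
  have hb' : (0 : ℝ) < b := by exact_mod_cast hb
  field_simp at e
  have e' : k * b + a * h = a * b := by exact_mod_cast e
  have hd : a ∣ k * b := (Nat.dvd_add_left ⟨h, rfl⟩).1 (e' ▸ ⟨b, rfl⟩)
  have hle := Nat.le_of_dvd hk (hcop.dvd_of_dvd_mul_right hd)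
  nlinarith [Nat.mul_le_mul_right b hle, Nat.mul_pos ha hh]

/-- The forward direction for angles `0 ≤ β < α ≤ π`. -/
lemma exists_of_angles {a b : ℕ} (ha : 0 < a) (hb : 0 < b) (hcop : Nat.Coprime a b) {α β : ℝ}
    (h0 : 0 ≤ β) (hlt : β < α) (hpi : α ≤ π)
    (h1 : (Polynomial.Chebyshev.T ℝ a).eval (cos α) = (Polynomial.Chebyshev.T ℝ a).eval (cos β))
    (h2 : (Polynomial.Chebyshev.T ℝ b).eval (cos α) = (Polynomial.Chebyshev.T ℝ b).eval (cos β)) :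
    ∃ h k : ℕ, 0 < h ∧ 0 < k ∧ (k : ℝ) / a + (h : ℝ) / b < 1 ∧
      ({cos α, cos β} : Set ℝ) =
        {cos (((k : ℝ) / a + (h : ℝ) / b) * π), cos (((k : ℝ) / a - (h : ℝ) / b) * π)} := by
  obtain ⟨u, v, rfl, rfl⟩ : ∃ u v, α = u + v ∧ β = u - v :=
    ⟨(α + β) / 2, (α - β) / 2, by ring, by ring⟩
  have key : ∀ h k : ℕ, 0 < h → 0 < k → u + v = ((k : ℝ) / a + (h : ℝ) / b) * π →
      (k : ℝ) / a + (h : ℝ) / b < 1 := by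
    intro h k hh hk e
    refine lt_of_le_of_ne ?_ (div_add_div_ne_one ha hb hcop hh hk)
    by_contra! hc
    nlinarith [pi_pos]
  have u0 : 0 < u := by linarith
  have v0 : 0 < v := by linarith
  rw [T_eval_cos_eq_iff] at h1 h2
  rcases h1 with h1 | h1 <;> rcases h2 with h2 | h2
  · exact (not_sin_eq_zero_of_coprime ha hcop u0 (by linarith) h1 h2).elim
  · obtain ⟨k, hk, rfl⟩ := exists_nat_of_sin_eq_zero ha u0 h1
    obtain ⟨h, hh, rfl⟩ := exists_nat_of_sin_eq_zero hb v0 h2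
    refine ⟨h, k, hh, hk, key h k hh hk (by ring), ?_⟩
    rw [← add_mul, ← sub_mul]
  · obtain ⟨k, hk, rfl⟩ := exists_nat_of_sin_eq_zero ha v0 h1
    obtain ⟨h, hh, rfl⟩ := exists_nat_of_sin_eq_zero hb u0 h2
    refine ⟨h, k, hh, hk, key h k hh hk (by ring), ?_⟩
    rw [← add_mul, ← sub_mul, add_comm ((h : ℝ) / b), ← cos_neg (((h : ℝ) / b - k / a) * π),
      ← neg_mul, neg_sub]
  · exact (not_sin_eq_zero_of_coprime ha hcop v0 (by linarith) h1 h2).elim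

lemma T_eval_neg (n : ℕ) (x : ℝ) : (Polynomial.Chebyshev.T ℝ n).eval (-x) =
    (-1) ^ n * (Polynomial.Chebyshev.T ℝ n).eval x := by
  rw [Polynomial.Chebyshev.T_eval_neg]
  simp

lemma abs_T_eval (n : ℕ) {x : ℝ} (hx : 1 ≤ |x|) :
    |(Polynomial.Chebyshev.T ℝ n).eval x| = cosh (n * arcosh |x|) := by
  have h : |(Polynomial.Chebyshev.T ℝ n).eval x| = |(Polynomial.Chebyshev.T ℝ n).eval (abs x)| := by
    rcases abs_choice x with h | h <;> rw [h]
    rw [T_eval_neg, abs_mul]; simp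
  rw [h]
  nth_rw 1 [← cosh_arcosh hx]
  rw [Polynomial.Chebyshev.T_real_cosh, abs_of_pos (cosh_pos _)]
  simp

lemma abs_le_one_of_T_eval_eq {a b : ℕ} (ha : 0 < a) (hb : 0 < b) (hcop : Nat.Coprime a b)
    {s t : ℝ} (hst : s ≠ t)
    (h1 : (Polynomial.Chebyshev.T ℝ a).eval s = (Polynomial.Chebyshev.T ℝ a).eval t)
    (h2 : (Polynomial.Chebyshev.T ℝ b).eval s = (Polynomial.Chebyshev.T ℝ b).eval t) :
    |s| ≤ 1 := by
  by_contra! hs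
  have ha' : (a : ℤ) ≠ 0 := by exact_mod_cast ha.ne'
  have hb' : (b : ℤ) ≠ 0 := by exact_mod_cast hb.ne'
  have ht : 1 < |t| := by
    have := Polynomial.Chebyshev.one_lt_abs_eval_T_real ha' hs
    by_contra! hc
    rw [h1] at this
    linarith [Polynomial.Chebyshev.abs_eval_T_real_le_one a hc]
  have habs : |s| = |t| := by
    have e := congrArg abs h1
    rw [abs_T_eval a hs.le, abs_T_eval a ht.le] at e
    have ps := arcosh_pos hs
    have pt := arcosh_pos ht
    have e2 := cosh_strictMonoOn.injOn (x₁ := a * arcosh |s|) (x₂ := a * arcosh |t|)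
      (Set.mem_Ici.2 (by positivity)) (Set.mem_Ici.2 (by positivity)) e
    have e3 : arcosh |s| = arcosh |t| := mul_left_cancel₀ (by exact_mod_cast ha') e2
    rw [← cosh_arcosh hs.le, e3, cosh_arcosh ht.le]
  have hneg : t = -s := by
    rcases abs_eq_abs.1 habs with h | h
    · exact (hst h).elim
    · linarith
  have odd_case : ∀ n : ℕ, Odd n →
      (Polynomial.Chebyshev.T ℝ n).eval s = (Polynomial.Chebyshev.T ℝ n).eval t → False := by
    intro n hn e
    have hn0 : (n : ℤ) ≠ 0 := by exact_mod_cast hn.pos.ne'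
    have := Polynomial.Chebyshev.one_lt_abs_eval_T_real hn0 hs
    rw [hneg, T_eval_neg, hn.neg_one_pow] at e
    have z : (Polynomial.Chebyshev.T ℝ n).eval s = 0 := by linarith
    rw [z] at this
    norm_num at this
  rcases Nat.even_or_odd a with hae | hao
  · rcases Nat.even_or_odd b with hbe | hbo
    · have := Nat.dvd_gcd hae.two_dvd hbe.two_dvd
      rw [hcop] at this
      omega
    · exact odd_case b hbo h2
  · exact odd_case a hao h1

theorem stmt4 (a b : ℕ) (ha : 0 < a) (hb : 0 < b) (hcop : Nat.Coprime a b)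
    (s t : ℝ) (hst : s ≠ t) :
    ((Polynomial.Chebyshev.T ℝ a).eval s = (Polynomial.Chebyshev.T ℝ a).eval t ∧
     (Polynomial.Chebyshev.T ℝ b).eval s = (Polynomial.Chebyshev.T ℝ b).eval t) ↔
    ∃ h k : ℕ, 0 < h ∧ 0 < k ∧ (k : ℝ) / a + (h : ℝ) / b < 1 ∧
      ({s, t} : Set ℝ) =
        {Real.cos (((k : ℝ) / a + (h : ℝ) / b) * Real.pi),
         Real.cos (((k : ℝ) / a - (h : ℝ) / b) * Real.pi)} := by
  constructor
  · rintro ⟨h1, h2⟩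
    obtain ⟨s1, s2⟩ := abs_le.1 (abs_le_one_of_T_eval_eq ha hb hcop hst h1 h2)
    obtain ⟨t1, t2⟩ := abs_le.1 (abs_le_one_of_T_eval_eq ha hb hcop hst.symm h1.symm h2.symm)
    rw [← cos_arccos s1 s2, ← cos_arccos t1 t2] at h1 h2 hst ⊢
    rcases lt_or_gt_of_ne (fun e => hst (congrArg cos e) : arccos s ≠ arccos t) with h | h
    · rw [Set.pair_comm (cos (arccos s))]
      exact exists_of_angles ha hb hcop (arccos_nonneg _) h (arccos_le_pi _) h1.symm h2.symm
    · exact exists_of_angles ha hb hcop (arccos_nonneg _) h (arccos_le_pi _) h1 h2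
  · rintro ⟨h, k, -, -, -, e⟩
    have ha' : (a : ℝ) ≠ 0 := by exact_mod_cast ha.ne'
    have hb' : (b : ℝ) ≠ 0 := by exact_mod_cast hb.ne'
    rw [add_mul, sub_mul] at e
    have A := (T_eval_cos_eq_iff a ((k : ℝ) / a * π) ((h : ℝ) / b * π)).2 (Or.inl (by
      rw [← mul_assoc, mul_div_cancel₀ _ ha']; exact sin_nat_mul_pi k))
    have B := (T_eval_cos_eq_iff b ((k : ℝ) / a * π) ((h : ℝ) / b * π)).2 (Or.inr (by
      rw [← mul_assoc, mul_div_cancel₀ _ hb']; exact sin_nat_mul_pi h))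
    rcases Set.pair_eq_pair_iff.1 e with ⟨rfl, rfl⟩ | ⟨rfl, rfl⟩
    · exact ⟨A, B⟩
    · exact ⟨A.symm, B.symm⟩
end

section
/- Let a and b be coprime positive integers. The set of pairs (s, t) of real numbers with s < t, T_a(s) = T_a(t) and T_b(s) = T_b(t) is finite and has exactly (a−1)(b−1)/2 elements. -/
/-!
For `s`, `t` in `[-1, 1]`, write `s = cos θ`, `t = cos φ` with `0 ≤ φ < θ ≤ π`. The equation
`T_a(s) = T_a(t)` says that `a (θ - φ)` or `a (θ + φ)` lies in `2πℤ`, and likewise for `b`. If the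
same sign occurs for both `a` and `b`, coprimality puts `θ - φ` or `θ + φ` itself in `2πℤ`, which is
impossible because both lie strictly between `0` and `2π`. So the signs differ, and `(s, t)` is
`(cos π(k/a + l/b), cos π(k/a - l/b))` for positive integers `k`, `l` with `k/a + l/b ≤ 1`
(`exists_index`). Conversely every such `(k, l)` gives a solution (`index_mem`), and distinct
`(k, l)` give distinct values of `k/a + l/b` (`lattice_inj`).

No solution leaves `[-1, 1]`: outside it `|T_a(x)|` exceeds `1` and is a strictly increasing
function of `|x|`, so `s = -t`, which contradicts the oddness of whichever of `T_a`, `T_b` has odd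
index (`abs_le_one_of_eval_eq`).

The admissible `(k, l)` are the points of the box `[1, a-1] × [1, b-1]` strictly below its diagonal
`kb + la = ab`. By coprimality no point of the box lies on the diagonal, and
`(k, l) ↦ (a - k, b - l)` exchanges the two sides, so half of the box is admissible (`card_index`).
-/

open Polynomial Real

/-! ### Lattice points below the diagonal -/

/-- The lattice points `(k, l)` with `1 ≤ k < a`, `1 ≤ l < b` and `k/a + l/b < 1`, the last
condition being written without denominators. -/
def chebIndex (a b : ℕ) : Finset (ℕ × ℕ) :=
  (Finset.Ico 1 a ×ˢ Finset.Ico 1 b).filter fun p => p.1 * b + p.2 * a < a * b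

/-- No point of the open box lies on the diagonal. -/
lemma off_diagonal {a b k l : ℕ} (hcop : Nat.Coprime a b) (hk : 1 ≤ k) (hka : k < a) :
    k * b + l * a ≠ a * b := by
  intro h
  have h1 : a ∣ k * b := by
    have : a ∣ k * b + l * a := h ▸ dvd_mul_right a b
    exact (Nat.dvd_add_left (dvd_mul_left a l)).1 this
  exact absurd (Nat.le_of_dvd hk (hcop.dvd_of_dvd_mul_right h1)) (by omega)

lemma card_index {a b : ℕ} (hcop : Nat.Coprime a b) :
    (chebIndex a b).card = (a - 1) * (b - 1) / 2 := by
  have h1 := Finset.card_filter_add_card_filter_not (s := Finset.Ico 1 a ×ˢ Finset.Ico 1 b)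
    (fun p : ℕ × ℕ => p.1 * b + p.2 * a < a * b)
  have h2 : (chebIndex a b).card = ((Finset.Ico 1 a ×ˢ Finset.Ico 1 b).filter
      fun p => ¬ p.1 * b + p.2 * a < a * b).card := by
    have key : ∀ k l : ℕ, k < a → l < b →
        (a - k) * b + (b - l) * a + (k * b + l * a) = 2 * (a * b) := by
      intro k l hk hl
      obtain ⟨k', rfl⟩ := Nat.exists_eq_add_of_lt hk
      obtain ⟨l', rfl⟩ := Nat.exists_eq_add_of_lt hl
      have e1 : k + k' + 1 - k = k' + 1 := by omega
      have e2 : l + l' + 1 - l = l' + 1 := by omega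
      rw [e1, e2]; ring
    refine Finset.card_nbij' (fun p => (a - p.1, b - p.2)) (fun p => (a - p.1, b - p.2))
      ?_ ?_ ?_ ?_
    · rintro ⟨k, l⟩ h
      simp only [chebIndex, Finset.coe_filter, Finset.mem_product, Finset.mem_Ico,
        Set.mem_ofPred_eq] at h ⊢
      have := key k l (by omega) (by omega)
      omega
    · rintro ⟨k, l⟩ h
      simp only [chebIndex, Finset.coe_filter, Finset.mem_product, Finset.mem_Ico,
        Set.mem_ofPred_eq] at h ⊢
      have := key k l (by omega) (by omega)
      have := off_diagonal (l := l) hcop h.1.1.1 h.1.1.2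
      omega
    · rintro ⟨k, l⟩ h
      simp only [chebIndex, Finset.coe_filter, Finset.mem_product, Finset.mem_Ico,
        Set.mem_ofPred_eq] at h
      ext <;> simp <;> omega
    · rintro ⟨k, l⟩ h
      simp only [Finset.coe_filter, Finset.mem_product, Finset.mem_Ico,
        Set.mem_ofPred_eq] at h
      ext <;> simp <;> omega
  rw [← h2, Finset.card_product, Nat.card_Ico, Nat.card_Ico] at h1
  change (chebIndex a b).card + _ = _ at h1
  omega

lemma lattice_inj {a b k l k' l' : ℕ} (hcop : Nat.Coprime a b) (ha : 0 < a) (hb : 0 < b)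
    (hk : k < a) (hk' : k' < a) (h : (k / a + l / b : ℝ) = k' / a + l' / b) :
    k = k' ∧ l = l' := by
  have ha' : (a : ℝ) ≠ 0 := by positivity
  have hb' : (b : ℝ) ≠ 0 := by positivity
  field_simp at h
  have hz : (b : ℤ) * k + a * l = b * k' + a * l' := by
    have : (b : ℝ) * k + a * l = b * k' + a * l' := by linarith
    exact_mod_cast this
  have hd : (a : ℤ) ∣ b * ((k : ℤ) - k') := ⟨(l' : ℤ) - l, by linarith⟩
  have hd' := (Nat.isCoprime_iff_coprime.2 hcop).dvd_of_dvd_mul_left hd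
  have h0 : (k : ℤ) - k' = 0 :=
    Int.eq_zero_of_abs_lt_dvd hd' (by rw [abs_lt]; constructor <;> omega)
  have hkk : k = k' := by omega
  subst hkk
  refine ⟨rfl, ?_⟩
  have : (a : ℤ) * l = a * l' := by linarith
  have := mul_left_cancel₀ (by positivity) this
  exact_mod_cast this

/-! ### Coincidences of Chebyshev values -/

/-- If `a x` and `b x` are both multiples of `2π`, so is `x`, by a Bézout relation. -/
lemma eq_two_pi_of_coprime {a b : ℕ} (hcop : Nat.Coprime a b) {x : ℝ} {m n : ℤ}
    (hm : a * x = 2 * m * π) (hn : b * x = 2 * n * π) : ∃ j : ℤ, x = 2 * j * π := by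
  obtain ⟨u, v, huv⟩ := Nat.isCoprime_iff_coprime.2 hcop
  have huv' : (u : ℝ) * a + v * b = 1 := by exact_mod_cast huv
  refine ⟨u * m + v * n, ?_⟩
  push_cast
  linear_combination (-x) * huv' + u * hm + v * hn

lemma eq_of_eval_eq_cos {n : ℕ} {x y : ℝ}
    (h : (Chebyshev.T ℝ n).eval (cos x) = (Chebyshev.T ℝ n).eval (cos y)) :
    ∃ m : ℤ, n * (x - y) = 2 * m * π ∨ n * (x + y) = 2 * m * π := by
  rw [Chebyshev.T_real_cos, Chebyshev.T_real_cos, Real.cos_eq_cos_iff] at h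
  push_cast at h
  obtain ⟨m, h | h⟩ := h
  · exact ⟨-m, Or.inl (by push_cast; linarith)⟩
  · exact ⟨m, Or.inr (by linarith)⟩

lemma eval_T_neg_abs (n : ℕ) (x : ℝ) :
    |(Chebyshev.T ℝ n).eval (-x)| = |(Chebyshev.T ℝ n).eval x| := by
  rw [Chebyshev.T_eval_neg, abs_mul]
  rcases Int.even_or_odd (n : ℤ) with h | h
  · simp [Int.negOnePow_even _ h]
  · simp [Int.negOnePow_odd _ h]

lemma abs_eval_eq_cosh (n : ℕ) {x : ℝ} (hx : 1 ≤ |x|) :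
    |(Chebyshev.T ℝ n).eval x| = cosh (n * arcosh |x|) := by
  have h : |(Chebyshev.T ℝ n).eval x| = |(Chebyshev.T ℝ n).eval (|x|)| := by
    rcases abs_choice x with h | h <;> rw [h]
    rw [eval_T_neg_abs]
  rw [h]
  conv_lhs => rw [← cosh_arcosh hx]
  rw [Chebyshev.T_real_cosh, abs_of_pos (cosh_pos _)]
  norm_cast

/-- Outside `[-1, 1]`, `|T_n x|` determines `|x|`. -/
lemma abs_eq_of_eval_eq {n : ℕ} (hn : 0 < n) {s t : ℝ} (hs : 1 < |s|)
    (h : (Chebyshev.T ℝ n).eval s = (Chebyshev.T ℝ n).eval t) : |s| = |t| := by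
  have ht : 1 < |t| := by
    by_contra! ht
    have h1 := Chebyshev.abs_eval_T_real_le_one n ht
    have h2 := Chebyshev.one_lt_abs_eval_T_real (n := n) (by omega) hs
    rw [h] at h2
    linarith
  have h1 : cosh (n * arcosh |s|) = cosh (n * arcosh |t|) := by
    rw [← abs_eval_eq_cosh n hs.le, ← abs_eval_eq_cosh n ht.le, h]
  have h2 : (n : ℝ) * arcosh |s| = n * arcosh |t| :=
    cosh_strictMonoOn.injOn (Set.mem_Ici.2 (mul_nonneg n.cast_nonneg (arcosh_nonneg hs.le)))
      (Set.mem_Ici.2 (mul_nonneg n.cast_nonneg (arcosh_nonneg ht.le))) h1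
  have h3 := mul_left_cancel₀ (by positivity) h2
  rw [← cosh_arcosh hs.le, h3, cosh_arcosh ht.le]

lemma eval_ne_neg_of_odd {n : ℕ} (hn : Odd n) {t : ℝ} (ht : 1 < |t|) :
    (Chebyshev.T ℝ n).eval (-t) ≠ (Chebyshev.T ℝ n).eval t := by
  intro h
  rw [Chebyshev.T_eval_neg, Int.negOnePow_odd _ (by exact_mod_cast hn)] at h
  have h2 := Chebyshev.one_lt_abs_eval_T_real (n := n) (by have := hn.pos; omega) ht
  have h3 : (Chebyshev.T ℝ n).eval t = 0 := by
    push_cast at h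
    linarith
  rw [h3] at h2
  norm_num at h2

lemma abs_le_one_of_eval_eq {a b : ℕ} (ha : 0 < a) (hcop : Nat.Coprime a b)
    {s t : ℝ} (hst : s ≠ t)
    (h1 : (Chebyshev.T ℝ a).eval s = (Chebyshev.T ℝ a).eval t)
    (h2 : (Chebyshev.T ℝ b).eval s = (Chebyshev.T ℝ b).eval t) : |s| ≤ 1 := by
  by_contra! hs
  have h := abs_eq_of_eval_eq ha hs h1
  have hs' : s = -t := (abs_eq_abs.1 h).resolve_left hst
  rw [h] at hs
  subst hs'
  rcases Nat.even_or_odd a with hae | hao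
  · rcases Nat.even_or_odd b with hbe | hbo
    · have := Nat.dvd_gcd hae.two_dvd hbe.two_dvd
      rw [hcop] at this
      omega
    · exact eval_ne_neg_of_odd hbo hs h2
  · exact eval_ne_neg_of_odd hao hs h1

/-! ### Solutions and lattice points -/

/-- The solution attached to `(k, l)`: the cosines of `π(k/a + l/b)` and `π(k/a - l/b)`. -/
noncomputable def chebPair (a b : ℕ) (p : ℕ × ℕ) : ℝ × ℝ :=
  (cos (π * (p.1 / a + p.2 / b)), cos (π * (p.1 / a - p.2 / b)))

lemma cos_nat_mul_pi_add (k : ℕ) (y : ℝ) : cos (k * π + y) = cos (k * π - y) := by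
  rw [cos_add, cos_sub, sin_nat_mul_pi]; ring

lemma mem_chebIndex {a b : ℕ} {p : ℕ × ℕ} (h : p ∈ chebIndex a b) :
    1 ≤ p.1 ∧ p.1 < a ∧ 1 ≤ p.2 ∧ p.2 < b ∧ (p.1 / a + p.2 / b : ℝ) < 1 := by
  simp only [chebIndex, Finset.mem_filter, Finset.mem_product, Finset.mem_Ico] at h
  obtain ⟨⟨⟨h1, h2⟩, h3, h4⟩, h5⟩ := h
  refine ⟨h1, h2, h3, h4, ?_⟩
  have ha' : (0 : ℝ) < a := by exact_mod_cast (by omega : 0 < a)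
  have hb' : (0 : ℝ) < b := by exact_mod_cast (by omega : 0 < b)
  rw [div_add_div _ _ ha'.ne' hb'.ne', div_lt_one (by positivity)]
  have : (p.1 * b + p.2 * a : ℝ) < a * b := by exact_mod_cast h5
  linarith

lemma index_mem {a b : ℕ} {p : ℕ × ℕ} (h : p ∈ chebIndex a b) :
    (chebPair a b p).1 < (chebPair a b p).2 ∧
    (Chebyshev.T ℝ a).eval (chebPair a b p).1 = (Chebyshev.T ℝ a).eval (chebPair a b p).2 ∧
    (Chebyshev.T ℝ b).eval (chebPair a b p).1 = (Chebyshev.T ℝ b).eval (chebPair a b p).2 := by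
  obtain ⟨h1, h2, h3, h4, h5⟩ := mem_chebIndex h
  have ha' : (0 : ℝ) < a := by exact_mod_cast (by omega : 0 < a)
  have hb' : (0 : ℝ) < b := by exact_mod_cast (by omega : 0 < b)
  have hk : (0 : ℝ) < p.1 := by exact_mod_cast h1
  have hl : (0 : ℝ) < p.2 := by exact_mod_cast h3
  have hx : (0 : ℝ) < p.1 / a := by positivity
  have hy : (0 : ℝ) < p.2 / b := by positivity
  refine ⟨?_, ?_, ?_⟩
  · simp only [chebPair]
    rw [← cos_abs (π * (p.1 / a - p.2 / b)), abs_mul, abs_of_pos pi_pos]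
    apply cos_lt_cos_of_nonneg_of_le_pi (by positivity)
    · nlinarith [pi_pos]
    · exact mul_lt_mul_of_pos_left (abs_lt.2 ⟨by linarith, by linarith⟩) pi_pos
  · simp only [chebPair, Chebyshev.T_real_cos]
    convert cos_nat_mul_pi_add p.1 (a * π * (p.2 / b)) using 2 <;> push_cast <;> field_simp
  · simp only [chebPair, Chebyshev.T_real_cos]
    rw [← cos_neg (((b : ℤ) : ℝ) * (π * (p.1 / a - p.2 / b)))]
    convert cos_nat_mul_pi_add p.2 (b * π * (p.1 / a)) using 2 <;> push_cast <;> field_simp <;> ring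

lemma chebPair_injOn {a b : ℕ} (hcop : Nat.Coprime a b) :
    Set.InjOn (chebPair a b) (chebIndex a b) := by
  rintro p hp q hq h
  obtain ⟨h1, h2, h3, h4, h5⟩ := mem_chebIndex hp
  obtain ⟨g1, g2, g3, g4, g5⟩ := mem_chebIndex hq
  have h6 := injOn_cos
    ⟨by positivity, by nlinarith [pi_pos]⟩ ⟨by positivity, by nlinarith [pi_pos]⟩
    (congrArg Prod.fst h)
  obtain ⟨e1, e2⟩ := lattice_inj hcop (by omega) (by omega) h2 g2
    (mul_left_cancel₀ pi_pos.ne' h6)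
  exact Prod.ext e1 e2

/-- Positive reals `x = k/a` and `y = l/b` with `x + y ≤ 1` come from an admissible index: the
integers `k`, `l` are automatically in the box, and `x + y = 1` is excluded by coprimality. -/
lemma index_of_int {a b : ℕ} (ha : 0 < a) (hb : 0 < b) (hcop : Nat.Coprime a b) {k l : ℤ}
    {x y : ℝ} (hx : a * x = k) (hy : b * y = l) (hx0 : 0 < x) (hy0 : 0 < y) (hxy : x + y ≤ 1) :
    ∃ p ∈ chebIndex a b, x = p.1 / a ∧ y = p.2 / b := by
  have ha' : (0 : ℝ) < a := by exact_mod_cast ha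
  have hb' : (0 : ℝ) < b := by exact_mod_cast hb
  have hk : 0 < k := by
    have : (0 : ℝ) < k := hx ▸ mul_pos ha' hx0
    exact_mod_cast this
  have hl : 0 < l := by
    have : (0 : ℝ) < l := hy ▸ mul_pos hb' hy0
    exact_mod_cast this
  lift k to ℕ using hk.le
  lift l to ℕ using hl.le
  push_cast at hx hy
  have hka : k < a := by
    have : (k : ℝ) < a := by rw [← hx]; nlinarith
    exact_mod_cast this
  have hlb : l < b := by
    have : (l : ℝ) < b := by rw [← hy]; nlinarith
    exact_mod_cast this
  have hle : k * b + l * a ≤ a * b := by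
    have : (k : ℝ) * b + l * a ≤ a * b := by
      rw [← hx, ← hy]
      nlinarith [mul_pos ha' hb']
    exact_mod_cast this
  have hk1 : 1 ≤ k := by omega
  have hne := off_diagonal (l := l) hcop hk1 hka
  refine ⟨(k, l), ?_, ?_, ?_⟩
  · simp only [chebIndex, Finset.mem_filter, Finset.mem_product, Finset.mem_Ico]
    omega
  · rw [← hx]; field_simp
  · rw [← hy]; field_simp

lemma exists_index {a b : ℕ} (ha : 0 < a) (hb : 0 < b) (hcop : Nat.Coprime a b)
    {s t : ℝ} (hst : s < t)
    (h1 : (Chebyshev.T ℝ a).eval s = (Chebyshev.T ℝ a).eval t)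
    (h2 : (Chebyshev.T ℝ b).eval s = (Chebyshev.T ℝ b).eval t) :
    ∃ p ∈ chebIndex a b, chebPair a b p = (s, t) := by
  have hs := abs_le.1 (abs_le_one_of_eval_eq ha hcop hst.ne h1 h2)
  have ht := abs_le.1 (abs_le_one_of_eval_eq ha hcop hst.ne' h1.symm h2.symm)
  have hlt : arccos t < arccos s := arccos_lt_arccos hs.1 hst ht.2
  have hsc := cos_arccos hs.1 hs.2
  have htc := cos_arccos ht.1 ht.2
  have hθ := arccos_le_pi s
  have hφ := arccos_nonneg t
  generalize arccos s = θ at *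
  generalize arccos t = φ at *
  subst hsc htc
  have hπ := pi_pos
  -- No `x` in `(0, 2π)` is an integer multiple of `2π`.
  have small : ∀ x : ℝ, 0 < x → x < 2 * π → ¬ ∃ j : ℤ, x = 2 * j * π := by
    rintro x hx0 hx1 ⟨j, rfl⟩
    have h1 : (0 : ℝ) < j := by nlinarith
    have h2 : (j : ℝ) < 1 := by nlinarith
    have h1' : 0 < j := by exact_mod_cast h1
    have h2' : j < 1 := by exact_mod_cast h2
    omega
  -- Normalised half-difference and half-sum of the angles.
  have hd0 : 0 < (θ - φ) / (2 * π) := div_pos (by linarith) (by linarith)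
  have hs0 : 0 < (θ + φ) / (2 * π) := div_pos (by linarith) (by linarith)
  have hsum : (θ - φ) / (2 * π) + (θ + φ) / (2 * π) = θ / π := by field_simp; ring
  have hle : θ / π ≤ 1 := (div_le_one hπ).2 hθ
  obtain ⟨m, hm | hm⟩ := eq_of_eval_eq_cos h1 <;> obtain ⟨n, hn | hn⟩ := eq_of_eval_eq_cos h2
  · exact absurd (eq_two_pi_of_coprime hcop hm hn) (small _ (by linarith) (by linarith))
  · obtain ⟨p, hp, e1, e2⟩ := index_of_int ha hb hcop (k := m) (l := n)
      (x := (θ - φ) / (2 * π)) (y := (θ + φ) / (2 * π))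
      (by rw [← mul_div_assoc, hm]; field_simp) (by rw [← mul_div_assoc, hn]; field_simp)
      hd0 hs0 (by linarith)
    refine ⟨p, hp, ?_⟩
    simp only [chebPair, ← e1, ← e2]
    rw [← cos_neg φ]
    congr 2 <;> field_simp <;> ring
  · obtain ⟨p, hp, e1, e2⟩ := index_of_int ha hb hcop (k := m) (l := n)
      (x := (θ + φ) / (2 * π)) (y := (θ - φ) / (2 * π))
      (by rw [← mul_div_assoc, hm]; field_simp) (by rw [← mul_div_assoc, hn]; field_simp)
      hs0 hd0 (by linarith)
    refine ⟨p, hp, ?_⟩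
    simp only [chebPair, ← e1, ← e2]
    congr 2 <;> field_simp <;> ring
  · exact absurd (eq_two_pi_of_coprime hcop hm hn) (small _ (by linarith) (by linarith))

theorem stmt5 (a b : ℕ) (ha : 0 < a) (hb : 0 < b) (hcop : Nat.Coprime a b)
    (S : Set (ℝ × ℝ))
    (hS : S = {p : ℝ × ℝ | p.1 < p.2 ∧
      (Polynomial.Chebyshev.T ℝ a).eval p.1 = (Polynomial.Chebyshev.T ℝ a).eval p.2 ∧
      (Polynomial.Chebyshev.T ℝ b).eval p.1 = (Polynomial.Chebyshev.T ℝ b).eval p.2}) :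
    S.Finite ∧ S.ncard = (a - 1) * (b - 1) / 2 := by
  have hS' : S = chebPair a b '' (chebIndex a b : Set (ℕ × ℕ)) := by
    subst hS
    ext ⟨s, t⟩
    constructor
    · rintro ⟨h, h1, h2⟩
      exact exists_index ha hb hcop h h1 h2
    · rintro ⟨p, hp, hpe⟩
      rw [← hpe]
      exact index_mem hp
  rw [hS']
  refine ⟨(Finset.finite_toSet _).image _, ?_⟩
  rw [(chebPair_injOn hcop).ncard_image, Set.ncard_coe_finset, card_index hcop]
end

section
/- Let a, b be positive integers, let c, c' be natural numbers with c' ≡ c (mod 2a) and c' ≡ −c (mod 2b), and let h, k be integers. Set t = cos((k/a + h/b)π) and s = cos((k/a − h/b)π). Then T_{c'}(t) − T_{c'}(s) = −(T_c(t) − T_c(s)). -/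
open Polynomial Real

/-- Writing `T_n (cos θ) = cos (n θ)` and expanding `cos (u + v) - cos (u - v) = -2 sin u sin v`
with `u = n k π / a`, `v = n h π / b`, both sides become products of sines. Passing from `c` to `c'`
changes `u` by a multiple of `2π`, which fixes `sin u`, and sends `v` to `-v` up to a multiple
of `2π`, which negates `sin v`. -/
theorem stmt7 (a b : ℕ) (ha : 0 < a) (hb : 0 < b) (c c' : ℕ)
    (h1 : (c' : ℤ) ≡ (c : ℤ) [ZMOD (2 * a)])
    (h2 : (c' : ℤ) ≡ -(c : ℤ) [ZMOD (2 * b)])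
    (h k : ℤ) (t s : ℝ)
    (ht : t = Real.cos (((k : ℝ) / a + (h : ℝ) / b) * Real.pi))
    (hs : s = Real.cos (((k : ℝ) / a - (h : ℝ) / b) * Real.pi)) :
    (Polynomial.Chebyshev.T ℝ c').eval t - (Polynomial.Chebyshev.T ℝ c').eval s =
      -((Polynomial.Chebyshev.T ℝ c).eval t - (Polynomial.Chebyshev.T ℝ c).eval s) := by
  have ha' : (a : ℝ) ≠ 0 := by positivity
  have hb' : (b : ℝ) ≠ 0 := by positivity
  have key (n : ℕ) : (Polynomial.Chebyshev.T ℝ n).eval t - (Polynomial.Chebyshev.T ℝ n).eval s =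
      -2 * Real.sin (n * (k / a * π)) * Real.sin (n * (h / b * π)) := by
    rw [ht, hs, Polynomial.Chebyshev.T_real_cos, Polynomial.Chebyshev.T_real_cos, Int.cast_natCast,
      add_mul, sub_mul, mul_add, mul_sub, Real.cos_add, Real.cos_sub]
    ring
  obtain ⟨m, hm⟩ := h1.symm.dvd
  obtain ⟨l, hl⟩ := h2.symm.dvd
  have hm' : (c' : ℝ) = c + 2 * a * m := by
    have : (c' : ℝ) - c = 2 * a * m := mod_cast hm
    linarith
  have hl' : (c' : ℝ) = -c + 2 * b * l := by
    have : (c' : ℝ) - -c = 2 * b * l := mod_cast hl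
    linarith
  have hu : Real.sin (c' * (k / a * π)) = Real.sin (c * (k / a * π)) := by
    rw [← Real.sin_add_int_mul_two_pi (c * (k / a * π)) (m * k), hm']
    congr 1
    push_cast
    field_simp
  have hv : Real.sin (c' * (h / b * π)) = -Real.sin (c * (h / b * π)) := by
    rw [← Real.sin_int_mul_two_pi_sub (c * (h / b * π)) (l * h), hl']
    congr 1
    push_cast
    field_simp
    ring
  rw [key, key, hu, hv]
  ring
end

section
/- Let a, b be coprime positive integers and let h, k be positive integers with k/a + h/b < 1. Set t = cos((k/a + h/b)π). Then T_a′(t)·T_b′(t)·(−1)^{h+k}·sin(ahπ/b)·sin(bkπ/a) > 0; in particular T_a′(t)·T_b′(t) is nonzero and has the same sign as (−1)^{h+k}·sin(ahπ/b)·sin(bkπ/a). -/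
/-!
With `θ = (k/a + h/b)π ∈ (0, π)` one has `T_n'(cos θ) · sin θ = n · sin (nθ)`. Since
`aθ = ahπ/b + kπ` and `bθ = bkπ/a + hπ`, this gives `sin (aθ) = (-1)^k sin (ahπ/b)` and
`sin (bθ) = (-1)^h sin (bkπ/a)`. Hence the quantity in question, multiplied by `sin² θ > 0`, is
`a b` times the square of `sin (ahπ/b) sin (bkπ/a)`. The sines do not vanish: `b ∣ ah` would force
`b ∣ h` by coprimality, whereas `0 < h < b`; likewise for the other one.
-/

open Polynomial Real

theorem derivative_T_eval_cos_mul_sin (n : ℕ) (θ : ℝ) :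
    (Polynomial.derivative (Polynomial.Chebyshev.T ℝ n)).eval (cos θ) * sin θ =
      n * sin (n * θ) := by
  have hU := Polynomial.Chebyshev.U_real_cos θ ((n : ℤ) - 1)
  rw [Polynomial.Chebyshev.T_derivative_eq_U]
  push_cast at hU ⊢
  rw [sub_add_cancel] at hU
  rw [eval_mul, eval_natCast, mul_assoc, hU]

theorem sin_coprime_mul_pi_div_ne_zero {a b h : ℕ} (hcop : Nat.Coprime a b) (hh : 0 < h)
    (hhb : h < b) : sin ((a : ℝ) * h * π / b) ≠ 0 := by
  have hb : (b : ℝ) ≠ 0 := by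
    have : b ≠ 0 := by omega
    exact_mod_cast this
  intro h0
  obtain ⟨m, hm⟩ := sin_eq_zero_iff.mp h0
  have h1 : (a : ℝ) * h = m * b := by
    rw [eq_div_iff hb] at hm
    exact mul_right_cancel₀ pi_ne_zero (by linarith)
  have h2 : (a : ℤ) * h = m * b := by exact_mod_cast h1
  have h3 : (b : ℤ) ∣ ((a * h : ℕ) : ℤ) := ⟨m, by push_cast; rw [h2, mul_comm]⟩
  have h4 : b ∣ h := hcop.symm.dvd_of_dvd_mul_left (Int.natCast_dvd_natCast.mp h3)
  exact absurd (Nat.le_of_dvd hh h4) (by omega)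

theorem stmt9 (a b : ℕ) (ha : 0 < a) (hb : 0 < b) (hcop : Nat.Coprime a b)
    (h k : ℕ) (hh : 0 < h) (hk : 0 < k)
    (hlt : (k : ℝ) / a + (h : ℝ) / b < 1)
    (t : ℝ) (ht : t = Real.cos (((k : ℝ) / a + (h : ℝ) / b) * Real.pi)) :
    0 < (Polynomial.derivative (Polynomial.Chebyshev.T ℝ a)).eval t *
        (Polynomial.derivative (Polynomial.Chebyshev.T ℝ b)).eval t *
        ((-1 : ℝ) ^ (h + k) * Real.sin ((a : ℝ) * h * Real.pi / b) *
          Real.sin ((b : ℝ) * k * Real.pi / a)) := by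
  have ha' : (0 : ℝ) < a := by exact_mod_cast ha
  have hb' : (0 : ℝ) < b := by exact_mod_cast hb
  have hka0 : (0 : ℝ) < k / a := by positivity
  have hhb0 : (0 : ℝ) < h / b := by positivity
  have hka : k < a := by
    have : (k : ℝ) / a < 1 := by linarith
    exact_mod_cast (div_lt_one ha').mp this
  have hhb : h < b := by
    have : (h : ℝ) / b < 1 := by linarith
    exact_mod_cast (div_lt_one hb').mp this
  have hs1 := sin_coprime_mul_pi_div_ne_zero hcop hh hhb
  have hs2 := sin_coprime_mul_pi_div_ne_zero hcop.symm hk hka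
  obtain ⟨θ, hθ⟩ : ∃ θ, θ = ((k : ℝ) / a + (h : ℝ) / b) * π := ⟨_, rfl⟩
  have hsin : 0 < sin θ := by
    apply sin_pos_of_pos_of_lt_pi
    · rw [hθ]; positivity
    · rw [hθ]; nlinarith [pi_pos]
  have hA := derivative_T_eval_cos_mul_sin a θ
  have hB := derivative_T_eval_cos_mul_sin b θ
  have e1 : (a : ℝ) * θ = a * h * π / b + k * π := by rw [hθ]; field_simp; ring
  have e2 : (b : ℝ) * θ = b * k * π / a + h * π := by rw [hθ]; field_simp
  rw [e1, sin_add_nat_mul_pi] at hA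
  rw [e2, sin_add_nat_mul_pi] at hB
  rw [ht, ← hθ]
  generalize sin ((a : ℝ) * h * π / b) = s at *
  generalize sin ((b : ℝ) * k * π / a) = r at *
  generalize (Polynomial.derivative (Polynomial.Chebyshev.T ℝ a)).eval (cos θ) = A at *
  generalize (Polynomial.derivative (Polynomial.Chebyshev.T ℝ b)).eval (cos θ) = B at *
  have key : A * B * ((-1 : ℝ) ^ (h + k) * s * r) * (sin θ) ^ 2 = a * b * (s * r) ^ 2 := by
    have hk2 : ((-1 : ℝ) ^ k) ^ 2 = 1 := by rw [← pow_mul, mul_comm, pow_mul]; simp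
    have hh2 : ((-1 : ℝ) ^ h) ^ 2 = 1 := by rw [← pow_mul, mul_comm, pow_mul]; simp
    calc A * B * ((-1 : ℝ) ^ (h + k) * s * r) * (sin θ) ^ 2
        = (A * sin θ) * (B * sin θ) * ((-1 : ℝ) ^ h * (-1) ^ k * s * r) := by
          rw [pow_add]; ring
      _ = a * b * (s * r) ^ 2 * (((-1 : ℝ) ^ k) ^ 2 * ((-1 : ℝ) ^ h) ^ 2) := by
          rw [hA, hB]; ring
      _ = a * b * (s * r) ^ 2 := by rw [hk2, hh2]; ring
  have hpos : 0 < (a : ℝ) * b * (s * r) ^ 2 := by positivity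
  rw [← key] at hpos
  exact pos_of_mul_pos_left hpos (by positivity)
end

section
/- Let a ≥ 2 be an integer, b = a + 1, and let h, k be positive integers with k/a + h/b < 1. Set t = cos((k/a + h/b)π) and s = cos((k/a − h/b)π). Then T_a′(t)·T_b′(t)·(t − s) > 0. -/
open Polynomial Real

/-!
Write `α = kπ/a`, `β = hπ/b` and `θ = α + β ∈ (0, π)`, so that `t = cos θ` and
`T_n'(t) sin θ = n sin (n θ)`. Because `b = a + 1`, one has `a θ = (k + h)π - β` and
`b θ = (k + h)π + α`, hence
`T_a'(t) T_b'(t) sin² θ = -a b sin α sin β`, while `t - s = -2 sin α sin β`.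
The product of the two is `2 a b (sin α sin β)² > 0`, since `α, β ∈ (0, π)`.
-/

lemma eval_derivative_T_cos_mul_sin (n : ℕ) (θ : ℝ) :
    (Polynomial.derivative (Polynomial.Chebyshev.T ℝ n)).eval (Real.cos θ) * Real.sin θ =
      n * Real.sin (n * θ) := by
  have hU := Polynomial.Chebyshev.U_real_cos θ ((n : ℤ) - 1)
  push_cast at hU
  rw [sub_add_cancel] at hU
  rw [Polynomial.Chebyshev.T_derivative_eq_U, eval_mul, mul_assoc, hU]
  simp

theorem stmt10 (a : ℕ) (ha : 2 ≤ a) (b : ℕ) (hb : b = a + 1)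
    (h k : ℕ) (hh : 0 < h) (hk : 0 < k)
    (hlt : (k : ℝ) / a + (h : ℝ) / b < 1)
    (t s : ℝ)
    (ht : t = Real.cos (((k : ℝ) / a + (h : ℝ) / b) * Real.pi))
    (hs : s = Real.cos (((k : ℝ) / a - (h : ℝ) / b) * Real.pi)) :
    0 < (Polynomial.derivative (Polynomial.Chebyshev.T ℝ a)).eval t *
        (Polynomial.derivative (Polynomial.Chebyshev.T ℝ b)).eval t * (t - s) := by
  have ha0 : (0 : ℝ) < a := by exact_mod_cast (by omega : 0 < a)
  have hb0 : (0 : ℝ) < b := by exact_mod_cast (by omega : 0 < b)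
  have hba : (b : ℝ) = a + 1 := by exact_mod_cast hb
  have hx : 0 < (k : ℝ) / a := div_pos (by exact_mod_cast hk) ha0
  have hy : 0 < (h : ℝ) / b := div_pos (by exact_mod_cast hh) hb0
  have hxa : (a : ℝ) * (k / a) = k := mul_div_cancel₀ _ ha0.ne'
  have hyb : (b : ℝ) * (h / b) = h := mul_div_cancel₀ _ hb0.ne'
  generalize (k : ℝ) / a = x at *
  generalize (h : ℝ) / b = y at *
  have hπ := Real.pi_pos
  have sin_pos' : ∀ z : ℝ, 0 < z → z < 1 → 0 < Real.sin (z * Real.pi) := fun z h0 h1 =>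
    Real.sin_pos_of_pos_of_lt_pi (by positivity) (by nlinarith)
  have hA := sin_pos' x hx (by linarith)
  have hB := sin_pos' y hy (by linarith)
  have hS := sin_pos' (x + y) (by linarith) hlt
  have hDa := eval_derivative_T_cos_mul_sin a ((x + y) * Real.pi)
  have hDb := eval_derivative_T_cos_mul_sin b ((x + y) * Real.pi)
  have hθa : (a : ℝ) * ((x + y) * Real.pi) = ((k + h : ℕ) : ℝ) * Real.pi - y * Real.pi := by
    push_cast
    rw [← hxa, ← hyb, hba]; ring
  have hθb : (b : ℝ) * ((x + y) * Real.pi) = x * Real.pi + ((k + h : ℕ) : ℝ) * Real.pi := by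
    push_cast
    rw [← hxa, ← hyb, hba]; ring
  rw [hθa, Real.sin_nat_mul_pi_sub] at hDa
  rw [hθb, Real.sin_add_nat_mul_pi] at hDb
  have hts : t - s = -2 * (Real.sin (x * Real.pi) * Real.sin (y * Real.pi)) := by
    rw [ht, hs, add_mul, sub_mul, Real.cos_add, Real.cos_sub]; ring
  rw [← ht] at hDa hDb
  have he : ((-1 : ℝ) ^ (k + h)) * (-1) ^ (k + h) = 1 := by
    rw [← mul_pow]; simp
  rw [hts]
  generalize (Polynomial.derivative (Polynomial.Chebyshev.T ℝ a)).eval t = P at *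
  generalize (Polynomial.derivative (Polynomial.Chebyshev.T ℝ b)).eval t = Q at *
  generalize (-1 : ℝ) ^ (k + h) = e at *
  generalize Real.sin (x * Real.pi) = A at *
  generalize Real.sin (y * Real.pi) = B at *
  generalize Real.sin ((x + y) * Real.pi) = S at *
  have key : P * Q * (-2 * (A * B)) * (S * S) = 2 * a * b * (A * B) ^ 2 := by
    calc P * Q * (-2 * (A * B)) * (S * S) = (P * S) * (Q * S) * (-2 * (A * B)) := by ring
      _ = 2 * a * b * (A * B) ^ 2 * (e * e) := by rw [hDa, hDb]; ring
      _ = _ := by rw [he, mul_one]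
  refine pos_of_mul_pos_left (b := S * S) ?_ (by positivity)
  rw [key]; positivity
end

section
/- Let b ≥ 3 and c be coprime odd positive integers with b ≢ c (mod 4), so that λ = (3b − c)/4 is an integer; set θ = (3b − c)π/(4b). For j = 1, …, b−1 the real number sin((j − b)θ) is nonzero; let e_j ∈ {−1, 1} be its sign. Let p, q be the numerator and denominator of the continued fraction [e₁, 2e₂, e₃, 2e₄, …, e_{b−2}, 2e_{b−1}]. Then p divides q² − 2 or p divides q² + 2 (i.e. q² ≡ ±2 (mod p)). -/
/-!
The `b - 1` signs are grouped in consecutive pairs `(x, y) = (e (2i+1), e (2i+2))`, so that the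
continued fraction matrix becomes `M = ∏ B(x, y)` with `B(x, y) = A(x) A(2y)`.
For `ε = ±1` and `F = diag(1, 2ε)` one has `F * B(x, y)ᵀ = B(εy, εx) * F`
(`diag_mul_pairMat_transpose`), so `X ↦ F * Xᵀ * F⁻¹` reverses a product of pairs and multiplies
all signs by `ε`.

With `λ = (3b - c)/4` we have `b * θ = λ * π`, hence `sin ((j - b) * θ) = (-1)^λ * sin (j * θ)`. This
is nonzero for `0 < j < b` since `b` is coprime to `c`, and it makes the sign sequence
symmetric or antisymmetric: `e (b - j) = ε * e j` with `ε = -(-1)^λ`. Therefore `F * Mᵀ = M * F`,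
whose upper right entry reads `q = 2εp'`; together with `det M = pq' - p'q = 1` this gives
`q² = 2εp'q = 2ε(pq' - 1) ≡ -2ε (mod p)`.
-/

open Matrix Real

/-- The matrix `A(x) A(2y)` of two consecutive partial quotients `x, 2y`. -/
def pairMat (x y : ℤ) : Matrix (Fin 2) (Fin 2) ℤ := !![2 * x * y + 1, x; 2 * y, 1]

lemma cfMat_mul_cfMat_two (x y : ℤ) : cfMat x * cfMat (2 * y) = pairMat x y := by
  ext i j
  fin_cases i <;> fin_cases j <;> simp [cfMat, pairMat, Matrix.mul_apply, Fin.sum_univ_two]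
  ring

lemma pairMat_det (x y : ℤ) : (pairMat x y).det = 1 := by
  simp [pairMat, Matrix.det_fin_two]
  ring

lemma diag_mul_pairMat_transpose (ε x y : ℤ) (hε : ε * ε = 1) :
    !![1, 0; 0, 2 * ε] * (pairMat x y)ᵀ = pairMat (ε * y) (ε * x) * !![1, 0; 0, 2 * ε] := by
  ext i j
  fin_cases i <;> fin_cases j <;> simp [pairMat, Matrix.mul_apply, Fin.sum_univ_two]
  · linear_combination (-2 * x * y) * hε
  · linear_combination (-2 * y) * hε
  · ring

/-- Transposition reverses a product, so factorwise intertwining relations between the `(G i)ᵀ`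
and the `H i` combine into one between the transposed product and the reversed product. -/
lemma mul_prod_transpose (F : Matrix (Fin 2) (Fin 2) ℤ) (G H : ℕ → Matrix (Fin 2) (Fin 2) ℤ)
    (h : ∀ i, F * (G i)ᵀ = H i * F) (l : List ℕ) :
    F * ((l.map G).prod)ᵀ = ((l.map H).reverse).prod * F := by
  induction l with
  | nil => simp
  | cons a l ih =>
    simp only [List.map_cons, List.prod_cons, List.reverse_cons, List.prod_append,
      List.prod_nil, mul_one, Matrix.transpose_mul]
    rw [← mul_assoc, ih, mul_assoc, h, mul_assoc]

lemma cfProd_eq_prod_pairMat (e : ℕ → ℤ) (m : ℕ) :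
    cfProd ((List.range (2 * m)).map
      (fun i => if i % 2 = 0 then e (i + 1) else 2 * e (i + 1))) =
    ((List.range m).map (fun i => pairMat (e (2 * i + 1)) (e (2 * i + 2)))).prod := by
  induction m with
  | zero => simp [cfProd]
  | succ m ih =>
    have h2 : (2 * m + 1) % 2 ≠ 0 := by omega
    rw [show 2 * (m + 1) = 2 * m + 1 + 1 by ring, List.range_succ, List.range_succ,
      List.range_succ (n := m)]
    simp only [cfProd, List.map_append, List.prod_append, List.map_cons, List.map_nil,
      List.prod_cons, List.prod_nil, mul_one] at ih ⊢
    rw [ih, if_pos (by omega), if_neg h2, mul_assoc, cfMat_mul_cfMat_two]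

/-- The congruence for an arbitrary integer sequence with the symmetry `e (b - j) = ε * e j`,
where `b = 2 * m + 1`. -/
lemma dvd_of_symm (e : ℕ → ℤ) (m : ℕ) (ε : ℤ) (hε : ε * ε = 1)
    (hs : ∀ j, 1 ≤ j → j ≤ 2 * m → e (2 * m + 1 - j) = ε * e j) (l : List ℤ)
    (hl : l = (List.range (2 * m)).map
      (fun i => if i % 2 = 0 then e (i + 1) else 2 * e (i + 1))) :
    cfNum l ∣ (cfDen l) ^ 2 + 2 * ε := by
  have hM := cfProd_eq_prod_pairMat e m
  rw [← hl] at hM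
  have hrev : ((List.range m).map
      (fun i => pairMat (ε * e (2 * i + 2)) (ε * e (2 * i + 1)))).reverse =
      (List.range m).map (fun i => pairMat (e (2 * i + 1)) (e (2 * i + 2))) := by
    apply List.ext_getElem
    · simp
    · intro i h1 h2
      have hi : i < m := by simpa using h2
      simp only [List.getElem_reverse, List.getElem_map, List.getElem_range, List.length_map,
        List.length_range]
      rw [← hs _ (by omega) (by omega), ← hs _ (by omega) (by omega)]
      congr 2 <;> omega
  have key := mul_prod_transpose !![1, 0; 0, 2 * ε] _ _
    (fun i => diag_mul_pairMat_transpose ε (e (2 * i + 1)) (e (2 * i + 2)) hε) (List.range m)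
  rw [hrev, ← hM] at key
  have hdet : (cfProd l).det = 1 := by
    rw [hM]
    generalize List.range m = r
    induction r with
    | nil => simp
    | cons a r ih => simp only [List.map_cons, List.prod_cons, Matrix.det_mul, pairMat_det, ih,
        mul_one]
  have h01 := congrFun (congrFun key 0) 1
  simp [Matrix.mul_apply, Fin.sum_univ_two] at h01
  rw [Matrix.det_fin_two] at hdet
  refine ⟨2 * ε * cfProd l 1 1, ?_⟩
  unfold cfNum cfDen
  linear_combination (cfProd l 1 0) * h01 - 2 * ε * hdet

theorem stmt11 (b c : ℕ) (hb : 3 ≤ b) (hc : 0 < c)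
    (hbodd : Odd b) (hcodd : Odd c) (hcop : Nat.Coprime b c)
    (hmod : ¬ b ≡ c [MOD 4])
    (θ : ℝ) (hθ : θ = (3 * (b : ℝ) - c) * Real.pi / (4 * b))
    (e : ℕ → ℤ)
    (hesign : ∀ j, e j = if 0 < Real.sin (((j : ℝ) - b) * θ) then 1 else -1)
    (l : List ℤ)
    (hl : l = (List.range (b - 1)).map
      (fun i => if i % 2 = 0 then e (i + 1) else 2 * e (i + 1))) :
    (∀ j, 1 ≤ j → j ≤ b - 1 → Real.sin (((j : ℝ) - b) * θ) ≠ 0) ∧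
    (cfNum l ∣ (cfDen l) ^ 2 - 2 ∨ cfNum l ∣ (cfDen l) ^ 2 + 2) := by
  obtain ⟨m, hm⟩ := hbodd
  obtain ⟨k, hk⟩ := hcodd
  have hb0 : (b : ℝ) ≠ 0 := by
    have : b ≠ 0 := by omega
    exact_mod_cast this
  obtain ⟨L, hL⟩ : ∃ L : ℤ, 3 * (b : ℤ) - c = 4 * L := by
    have : ¬ b % 4 = c % 4 := hmod
    exact ⟨(3 * (b : ℤ) - c) / 4, by omega⟩
  have hLR : 3 * (b : ℝ) - c = 4 * L := by exact_mod_cast hL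
  have hbθ : (b : ℝ) * θ = L * Real.pi := by
    rw [hθ, hLR]
    field_simp
  have hshift : ∀ j : ℕ, Real.sin (((j : ℝ) - b) * θ) = (-1) ^ L * Real.sin (j * θ) := by
    intro j
    rw [sub_mul, hbθ, Real.sin_sub_int_mul_pi]
  have hne : ∀ j : ℕ, 1 ≤ j → j ≤ b - 1 → Real.sin (j * θ) ≠ 0 := by
    intro j h1 h2 h0
    obtain ⟨n, hn⟩ := Real.sin_eq_zero_iff.mp h0
    have h3 : (n : ℝ) * b = j * L := by
      apply mul_right_cancel₀ Real.pi_ne_zero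
      linear_combination (b : ℝ) * hn + (j : ℝ) * hbθ
    have h4 : n * (b : ℤ) = j * L := by exact_mod_cast h3
    have h5 : (b : ℤ) ∣ (j : ℤ) * c := ⟨3 * j - 4 * n, by linear_combination (-j : ℤ) * hL + 4 * h4⟩
    have h6 : b ∣ j * c := by exact_mod_cast h5
    have h7 := Nat.le_of_dvd (by omega) (hcop.dvd_of_dvd_mul_right h6)
    omega
  have hrefl : ∀ j : ℕ, j ≤ b →
      Real.sin ((((b - j : ℕ) : ℝ) - b) * θ) = -Real.sin (j * θ) := by
    intro j hj
    rw [Nat.cast_sub hj, ← Real.sin_neg]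
    congr 1
    ring
  have hbm : b - 1 = 2 * m := by omega
  have hpm : ((-1 : ℝ) ^ L = 1) ∨ ((-1 : ℝ) ^ L = -1) := by
    rcases Int.even_or_odd L with h | h
    · exact Or.inl h.neg_one_zpow
    · exact Or.inr h.neg_one_zpow
  refine ⟨fun j h1 h2 => ?_, ?_⟩
  · rw [hshift]
    exact mul_ne_zero (zpow_ne_zero _ (by norm_num)) (hne j h1 h2)
  · rw [hbm] at hl
    rcases hpm with h | h
    · left
      have := dvd_of_symm e m (-1) (by norm_num) (fun j h1 h2 => ?_) l hl
      · simpa [sub_eq_add_neg] using this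
      · have h0 := hne j h1 (by omega)
        rw [← hm, hesign, hesign, hrefl j (by omega), hshift, h, one_mul]
        rcases lt_or_gt_of_ne h0 with h' | h'
        · rw [if_pos (by linarith), if_neg (by linarith)]
          norm_num
        · rw [if_neg (by linarith), if_pos (by linarith)]
          norm_num
    · right
      have := dvd_of_symm e m 1 (by norm_num) (fun j h1 h2 => ?_) l hl
      · simpa using this
      · rw [← hm, hesign, hesign, hrefl j (by omega), hshift, h, one_mul, neg_one_mul]
end

section
/- Let b ≥ 3 and c be coprime odd positive integers with b ≢ c (mod 4) and b < c < 3b, so that λ = (3b − c)/4 is a positive integer; set θ = (3b − c)π/(4b). For j = 1, …, b−1 the real number sin((j − b)θ) is nonzero; let e_j ∈ {−1, 1} be its sign. Then the sequence (e₁, …, e_{b−1}) has no two consecutive sign changes (there is no index j with e_j·e_{j+1} = e_{j+1}·e_{j+2} = −1), and the number of indices j ∈ {1, …, b−2} with e_j·e_{j+1} = −1 equals λ − 1. -/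
/-!
Write `3 * b - c = 4 * L`. Then `θ = L * π / b`, the integers `L` and `b` are coprime, and `2 * L < b`.
Put `q j = ⌊j * L / b⌋`. As `(j - b) * θ = j * L * π / b - L * π` and `b ∤ j * L` for `0 < j < b`,
the sine is nonzero with sign `(-1) ^ (q j + L)` (`sin_eq`). Because `2 * L < b`, the floor `q`
increases by at most one over two successive steps, so a sign change at `j` means
`q (j + 1) = q j + 1`, and two consecutive changes cannot occur. The number of changes telescopes to
`q (b - 1) - q 1 = (L - 1) - 0` (`card_jumps`).
-/

open Real

/-- The reduction of `(j - b) * θ` modulo `π`: the remaining angle lies in `(0, π)`, so the sign of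
the sine is the parity of `⌊j * L / b⌋ + L`. -/
lemma sin_eq (b L j : ℕ) (hb : 0 < b) (hd : ¬ b ∣ j * L) :
    ∃ s : ℝ, 0 < s ∧
      Real.sin (((j : ℝ) - b) * (L * Real.pi / b)) = (-1) ^ (j * L / b + L) * s := by
  have hb' : (0 : ℝ) < b := by exact_mod_cast hb
  have hr0 : 0 < j * L % b := Nat.pos_of_ne_zero fun h => hd (Nat.dvd_of_mod_eq_zero h)
  have hr1 : j * L % b < b := Nat.mod_lt _ hb
  have hdiv : (j : ℝ) * L = b * ((j * L / b : ℕ) : ℝ) + ((j * L % b : ℕ) : ℝ) := by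
    exact_mod_cast (Nat.div_add_mod (j * L) b).symm
  generalize j * L % b = r at *
  generalize j * L / b = q at *
  have hr0' : (0 : ℝ) < r := by exact_mod_cast hr0
  have hr1' : (r : ℝ) < b := by exact_mod_cast hr1
  refine ⟨Real.sin (r / b * Real.pi), Real.sin_pos_of_pos_of_lt_pi (by positivity) ?_, ?_⟩
  · have : (r : ℝ) / b < 1 := (div_lt_one hb').2 hr1'
    nlinarith [Real.pi_pos]
  · have : ((j : ℝ) - b) * (L * Real.pi / b) = r / b * Real.pi + q * Real.pi - L * Real.pi := by
      field_simp
      linear_combination hdiv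
    rw [this, Real.sin_sub_nat_mul_pi, Real.sin_add_nat_mul_pi]
    ring

/-- A sequence with `q 1 = 0` and steps in `{0, 1}` has taken exactly `q (n + 1)` steps of size one
by index `n + 1`. -/
lemma card_jumps (q : ℕ → ℕ) (h1 : q 1 = 0)
    (hq : ∀ j, q (j + 1) = q j ∨ q (j + 1) = q j + 1) (n : ℕ) :
    ((Finset.Icc 1 n).filter (fun j => q (j + 1) = q j + 1)).card = q (n + 1) := by
  induction n with
  | zero => simp [h1]
  | succ n ih =>
    rw [← Finset.insert_Icc_right_eq_Icc_add_one (by omega), Finset.filter_insert]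
    rcases hq (n + 1) with h | h
    · rw [if_neg (by omega), ih, h]
    · rw [if_pos h, Finset.card_insert_of_notMem (by simp), ih, h]

theorem stmt12 (b c : ℕ) (hb : 3 ≤ b) (hbodd : Odd b) (hcodd : Odd c)
    (hcop : Nat.Coprime b c) (hmod : ¬ b ≡ c [MOD 4])
    (hbc : b < c) (hcb : c < 3 * b)
    (θ : ℝ) (hθ : θ = (3 * (b : ℝ) - c) * Real.pi / (4 * b))
    (e : ℕ → ℤ)
    (hesign : ∀ j, e j = if 0 < Real.sin (((j : ℝ) - b) * θ) then 1 else -1) :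
    (∀ j, 1 ≤ j → j ≤ b - 1 → Real.sin (((j : ℝ) - b) * θ) ≠ 0) ∧
    (∀ j, 1 ≤ j → j + 2 ≤ b - 1 →
      ¬(e j * e (j + 1) = -1 ∧ e (j + 1) * e (j + 2) = -1)) ∧
    ((Finset.Icc 1 (b - 2)).filter (fun j => e j * e (j + 1) = -1)).card
      = (3 * b - c) / 4 - 1 := by
  obtain ⟨L, hL⟩ : ∃ L, 3 * b = c + 4 * L := by
    refine ⟨(3 * b - c) / 4, ?_⟩
    unfold Nat.ModEq at hmod
    rw [Nat.odd_iff] at hbodd hcodd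
    omega
  have hL0 : 0 < L := by omega
  have hLb : 2 * L < b := by omega
  have hbpos : 0 < b := by omega
  have hθ' : θ = L * Real.pi / b := by
    have h : 3 * (b : ℝ) = c + 4 * L := by exact_mod_cast hL
    have hb0 : (b : ℝ) ≠ 0 := by positivity
    rw [hθ, h]
    field_simp
    ring
  have hcopL : Nat.Coprime b L := by
    refine Nat.Coprime.coprime_dvd_right (Dvd.intro_left 4 rfl) (?_ : Nat.Coprime b (4 * L))
    -- `gcd b (4 * L)` divides `3 * b - 4 * L = c`
    refine Nat.Coprime.eq_one_of_dvd (hcop.coprime_dvd_left (Nat.gcd_dvd_left b (4 * L))) ?_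
    have h1 : Nat.gcd b (4 * L) ∣ c + 4 * L := hL ▸ (Nat.gcd_dvd_left _ _).mul_left 3
    exact (Nat.dvd_add_left (Nat.gcd_dvd_right _ _)).1 h1
  have hnd : ∀ j, 1 ≤ j → j ≤ b - 1 → ¬ b ∣ j * L := fun j h1 h2 h => by
    have := Nat.le_of_dvd h1 (hcopL.dvd_of_dvd_mul_right h)
    omega
  have he : ∀ j, 1 ≤ j → j ≤ b - 1 → e j = (-1) ^ (j * L / b + L) := fun j h1 h2 => by
    obtain ⟨s, hs, h⟩ := sin_eq b L j hbpos (hnd j h1 h2)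
    rw [hesign, hθ', h]
    rcases neg_one_pow_eq_or ℤ (j * L / b + L) with hp | hp
    · have hp' : (-1 : ℝ) ^ (j * L / b + L) = 1 := by exact_mod_cast hp
      rw [hp, hp', if_pos (by linarith)]
    · have hp' : (-1 : ℝ) ^ (j * L / b + L) = -1 := by exact_mod_cast hp
      rw [hp, hp', if_neg (by linarith)]
  have hmono : ∀ j, j * L / b ≤ (j + 1) * L / b := fun j =>
    Nat.div_le_div_right (Nat.mul_le_mul_right L (by omega))
  have htwo : ∀ j, (j + 2) * L / b ≤ j * L / b + 1 := fun j => by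
    rw [← Nat.add_div_right _ hbpos]
    exact Nat.div_le_div_right (by linarith)
  have hstep : ∀ j, (j + 1) * L / b = j * L / b ∨ (j + 1) * L / b = j * L / b + 1 := fun j => by
    have h1 := hmono j
    have h2 : (j + 1) * L / b ≤ (j + 2) * L / b := hmono (j + 1)
    have h3 := htwo j
    omega
  have hchange : ∀ j, 1 ≤ j → j + 1 ≤ b - 1 →
      (e j * e (j + 1) = -1 ↔ (j + 1) * L / b = j * L / b + 1) := fun j h1 h2 => by
    rw [he j h1 (by omega), he (j + 1) (by omega) h2]
    rcases hstep j with h | h <;> rw [h]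
    · simp [← mul_pow]
    · rw [show j * L / b + 1 + L = (j * L / b + L) + 1 by omega, pow_succ, ← mul_assoc, ← mul_pow]
      simp
  refine ⟨fun j h1 h2 => ?_, fun j h1 h2 => ?_, ?_⟩
  · obtain ⟨s, hs, h⟩ := sin_eq b L j hbpos (hnd j h1 h2)
    rw [hθ', h]
    exact mul_ne_zero (pow_ne_zero _ (by norm_num)) hs.ne'
  · rw [hchange j h1 (by omega), hchange (j + 1) (by omega) (by omega)]
    rintro ⟨h3, h4⟩
    have h5 := htwo j
    rw [show j + 1 + 1 = j + 2 from rfl] at h4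
    omega
  · have hlast : (b - 1) * L / b = L - 1 := by
      obtain ⟨b', rfl⟩ : ∃ b', b = b' + 1 := ⟨b - 1, by omega⟩
      obtain ⟨L', rfl⟩ : ∃ L', L = L' + 1 := ⟨L - 1, by omega⟩
      simp only [Nat.add_sub_cancel]
      refine Nat.div_eq_of_lt_le ?_ ?_ <;> nlinarith
    rw [show (3 * b - c) / 4 = L by omega, ← hlast, show b - 1 = b - 2 + 1 by omega,
      ← card_jumps (fun j => j * L / b) (Nat.div_eq_of_lt (by omega)) hstep]
    refine congrArg Finset.card (Finset.filter_congr fun j hj => ?_)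
    rw [Finset.mem_Icc] at hj
    exact hchange j hj.1 (by omega)
end

section
/- For an integer k ≥ 2, define a sequence of 2k−2 integers by a_{2i−1} = 2·(−1)^{i−1} and a_{2i} = (−1)^{i−1} for i = 1, …, k−1. Then the continued fraction [a₁, a₂, …, a_{2k−2}] = [2, 1, −2, −1, 2, 1, …] and the continued fraction [3, 2, 2, …, 2] (a 3 followed by k−2 twos) have nonzero denominators and equal values. -/
/-!
With `ε = ± 1`, the block `cfMat (2ε) * cfMat ε` satisfies
`cfMat (2ε) * cfMat ε * twist (-ε) = twist ε * cfMat 2`, where `twist ε = !![1, 1; 0, ε]`.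
Telescoping over the blocks `ε = 1, -1, 1, …` shows that the matrix of the alternating
continued fraction with `m` blocks, times `twist ((-1) ^ m)`, is `twist 1 * cfMat 2 ^ m`. For
`m = n + 1` the latter is `cfMat 3 * cfMat 2 ^ n`, since `twist 1 * cfMat 2 = cfMat 3`.
As `twist` fixes the first basis vector, the two continued fractions have equal numerators and
equal denominators, and the denominator of `[3, 2, …, 2]` is visibly positive.
-/

open Matrix

/-- The matrix intertwining a block `[2ε, ε]` with the single partial quotient `2`. -/
def twist (ε : ℤ) : Matrix (Fin 2) (Fin 2) ℤ := !![1, 1; 0, ε]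

lemma block_mul_twist (ε : ℤ) (h : ε * ε = 1) :
    cfMat (2 * ε) * cfMat (1 * ε) * twist (-ε) = twist ε * cfMat 2 := by
  ext i j
  fin_cases i <;> fin_cases j <;> simp [cfMat, twist, Matrix.mul_apply, Fin.sum_univ_two] <;>
    linarith

lemma cfProd_alternating (m : ℕ) :
    cfProd ((List.range (2 * m)).map
      (fun j => (if j % 2 = 0 then 2 else 1) * (-1 : ℤ) ^ (j / 2))) * twist ((-1) ^ m)
      = twist 1 * cfMat 2 ^ m := by
  induction m with
  | zero => simp [cfProd]
  | succ m ih =>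
    have h1 : (2 * m + 1) % 2 = 1 := by omega
    have h2 : (2 * m + 1) / 2 = m := by omega
    have h3 : 2 * m % 2 = 0 := by omega
    have h4 : 2 * m / 2 = m := by omega
    have hε : (-1 : ℤ) ^ m * (-1) ^ m = 1 := by rw [← mul_pow]; simp
    have hblock : cfProd [2 * (-1 : ℤ) ^ m, 1 * (-1 : ℤ) ^ m] =
        cfMat (2 * (-1) ^ m) * cfMat (1 * (-1) ^ m) := by simp [cfProd]
    rw [show 2 * (m + 1) = 2 * m + 1 + 1 by ring, List.range_succ, List.range_succ,
      List.append_assoc, List.map_append, cfProd_append]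
    simp only [List.map_append, List.map_cons, List.map_nil, h1, h2, h3, h4, if_true,
      one_ne_zero, if_false, List.cons_append, List.nil_append]
    rw [hblock, show (-1 : ℤ) ^ (m + 1) = -(-1) ^ m by ring, mul_assoc,
      block_mul_twist _ hε, ← mul_assoc, ih, mul_assoc, ← pow_succ]

lemma cfProd_three_twos (n : ℕ) :
    cfProd (3 :: List.replicate n 2) = twist 1 * cfMat 2 ^ (n + 1) := by
  have h : twist 1 * cfMat 2 = cfMat 3 := by
    ext i j
    fin_cases i <;> fin_cases j <;> simp [cfMat, twist, Matrix.mul_apply, Fin.sum_univ_two]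
  rw [pow_succ', ← mul_assoc, h]
  simp [cfProd]

lemma cfMat_two_pow_pos (n : ℕ) :
    0 < (cfMat 2 ^ (n + 1)) 0 0 ∧ 0 < (cfMat 2 ^ (n + 1)) 1 0 := by
  induction n with
  | zero => simp [cfMat]
  | succ n ih =>
    rw [pow_succ']
    simp only [Matrix.mul_apply, Fin.sum_univ_two]
    generalize cfMat 2 ^ (n + 1) = X at *
    simp [cfMat]
    omega

lemma mul_twist_apply_zero (P : Matrix (Fin 2) (Fin 2) ℤ) (ε : ℤ) (i : Fin 2) :
    (P * twist ε) i 0 = P i 0 := by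
  simp [twist, Matrix.mul_apply, Fin.sum_univ_two]

theorem stmt13 (k : ℕ) (hk : 2 ≤ k)
    (l₁ l₂ : List ℤ)
    (hl₁ : l₁ = (List.range (2 * k - 2)).map
      (fun j => (if j % 2 = 0 then 2 else 1) * (-1 : ℤ) ^ (j / 2)))
    (hl₂ : l₂ = 3 :: List.replicate (k - 2) (2 : ℤ)) :
    cfDen l₁ ≠ 0 ∧ cfDen l₂ ≠ 0 ∧
      (cfNum l₁ : ℚ) / (cfDen l₁ : ℚ) = (cfNum l₂ : ℚ) / (cfDen l₂ : ℚ) := by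
  obtain ⟨n, rfl⟩ := Nat.exists_eq_add_of_le' hk
  rw [show 2 * (n + 2) - 2 = 2 * (n + 1) by omega] at hl₁
  rw [show n + 2 - 2 = n by omega] at hl₂
  have hmat : cfProd l₁ * twist ((-1) ^ (n + 1)) = cfProd l₂ := by
    rw [hl₁, hl₂, cfProd_alternating, cfProd_three_twos]
  have hcol (i : Fin 2) : cfProd l₁ i 0 = cfProd l₂ i 0 := by
    rw [← hmat, mul_twist_apply_zero]
  have hpos : 0 < cfDen l₂ := by
    have h := (cfMat_two_pow_pos n).2
    rw [cfDen, hl₂, cfProd_three_twos]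
    simpa [twist, Matrix.mul_apply, Fin.sum_univ_two] using h
  have hden : cfDen l₁ = cfDen l₂ := hcol 1
  have hnum : cfNum l₁ = cfNum l₂ := hcol 0
  rw [hden, hnum]
  exact ⟨hpos.ne', hpos.ne', rfl⟩
end

section
/- Let n ≥ 2 be an integer. There do not exist m ≥ 1 and signs e₁, …, e_{2m} ∈ {−1, 1} with e₁ = 1 such that the sequence (e₁, …, e_{2m}) has no two consecutive sign changes (no index i with eᵢe_{i+1} = e_{i+1}e_{i+2} = −1) and the continued fraction [e₁, 2e₂, e₃, 2e₄, …, e_{2m−1}, 2e_{2m}] has nonzero denominator with value equal to (2n² + 1)/(2n). -/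
/-!
Write `x = [e₀, 2e₁, e₂, 2e₃, …]` and let `a = e₀ + (e₁ - 1)/2 ∈ {1, 0, -1, -2}`. If the signs have
no two consecutive sign changes, then `a ≤ x ≤ a + 1`, and in particular the denominator does not
vanish. This is proved by induction, peeling off two entries at a time: up to sign, the matrix of
`[e₀, 2e₁]` is `T ^ a * S * T ^ b`, where `T` is the translation by `1`, `b = (e₁ + 1)/2`, and
`S y = (y - 1)/(2y - 1)` is the inversion exchanging the inside and the outside of `[0, 1]`.
By induction the tail `y = [e₂, 2e₃, …]` lies in a unit interval with integer endpoints, and the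
sign condition on `e₁, e₂, e₃` says exactly that `T ^ b` does not translate that interval onto
`[0, 1]`; hence `S` sends `y + b` into `[0, 1]`.

With `e₀ = 1` this gives `x ≤ 2`, whereas `(2n² + 1)/(2n) = n + 1/(2n) > 2` for `n ≥ 2`.
-/

open Matrix

def cfEntries (m : ℕ) (e : ℕ → ℤ) : List ℤ :=
  (List.range (2 * m)).map (fun j => if j % 2 = 0 then e j else 2 * e j)

lemma cfNum_cons (a : ℤ) (l : List ℤ) : cfNum (a :: l) = a * cfNum l + cfDen l := by
  simp [cfNum, cfDen, cfProd, cfMat, Matrix.mul_apply, Fin.sum_univ_two]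

lemma cfDen_cons (a : ℤ) (l : List ℤ) : cfDen (a :: l) = cfNum l := by
  simp [cfNum, cfDen, cfProd, cfMat, Matrix.mul_apply, Fin.sum_univ_two]

lemma cfEntries_succ (m : ℕ) (e : ℕ → ℤ) :
    cfEntries (m + 1) e = e 0 :: (2 * e 1) :: cfEntries m (fun j => e (j + 2)) := by
  have h : 2 * (m + 1) = 2 * m + 1 + 1 := by ring
  simp only [cfEntries, h, List.range_succ_eq_map, List.map_cons, List.map_map]
  have hp : ∀ j, (j + 1 + 1) % 2 = j % 2 := fun j => by omega
  simp [Function.comp_def, hp]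

/-- The value `p/q` of the continued fraction lies in the unit interval `[a, a + 1]`, where
`2a = 2e₀ + e₁ - 1`. The inequality is cleared of denominators separately for each sign of `q`,
so that it becomes linear once the signs are known. -/
lemma cf_bounds (m : ℕ) (e : ℕ → ℤ) (hs : ∀ i < 2 * (m + 1), e i = 1 ∨ e i = -1)
    (hc : ∀ i, i + 2 < 2 * (m + 1) →
      ¬(e i * e (i + 1) = -1 ∧ e (i + 1) * e (i + 2) = -1)) :
    (0 < cfDen (cfEntries (m + 1) e) ∧
      (2 * e 0 + e 1 - 1) * cfDen (cfEntries (m + 1) e) ≤ 2 * cfNum (cfEntries (m + 1) e) ∧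
      2 * cfNum (cfEntries (m + 1) e) ≤ (2 * e 0 + e 1 + 1) * cfDen (cfEntries (m + 1) e)) ∨
    (cfDen (cfEntries (m + 1) e) < 0 ∧
      2 * cfNum (cfEntries (m + 1) e) ≤ (2 * e 0 + e 1 - 1) * cfDen (cfEntries (m + 1) e) ∧
      (2 * e 0 + e 1 + 1) * cfDen (cfEntries (m + 1) e) ≤ 2 * cfNum (cfEntries (m + 1) e)) := by
  induction m generalizing e with
  | zero =>
    have hn : cfNum (cfEntries 0 (fun j => e (j + 2))) = 1 := by
      simp [cfEntries, cfNum, cfProd]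
    have hd : cfDen (cfEntries 0 (fun j => e (j + 2))) = 0 := by
      simp [cfEntries, cfDen, cfProd]
    rw [cfEntries_succ, cfNum_cons, cfDen_cons, cfNum_cons, cfDen_cons, hn, hd]
    rcases hs 0 (by omega) with h0 | h0 <;> rcases hs 1 (by omega) with h1 | h1 <;>
      simp [h0, h1]
  | succ m ih =>
    have IH := ih (fun j => e (j + 2)) (fun i hi => hs (i + 2) (by omega))
      (fun i hi => hc (i + 2) (by omega))
    have c := hc 1 (by omega)
    rw [cfEntries_succ (m + 1), cfNum_cons, cfDen_cons, cfNum_cons, cfDen_cons]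
    generalize cfNum (cfEntries (m + 1) (fun j => e (j + 2))) = P at *
    generalize cfDen (cfEntries (m + 1) (fun j => e (j + 2))) = Q at *
    simp only [Nat.reduceAdd] at IH c
    rcases hs 0 (by omega) with h0 | h0 <;> rcases hs 1 (by omega) with h1 | h1 <;>
      rcases hs 2 (by omega) with h2 | h2 <;> rcases hs 3 (by omega) with h3 | h3 <;>
      simp only [h0, h1, h2, h3] at IH c ⊢ <;> omega

theorem stmt16 (n : ℕ) (hn : 2 ≤ n) :
    ¬ ∃ (m : ℕ) (e : ℕ → ℤ), 1 ≤ m ∧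
      (∀ i < 2 * m, e i = 1 ∨ e i = -1) ∧ e 0 = 1 ∧
      (∀ i, i + 2 < 2 * m →
        ¬(e i * e (i + 1) = -1 ∧ e (i + 1) * e (i + 2) = -1)) ∧
      cfDen (cfEntries m e) ≠ 0 ∧
      (cfNum (cfEntries m e) : ℚ) / (cfDen (cfEntries m e) : ℚ)
        = (2 * (n : ℚ) ^ 2 + 1) / (2 * n) := by
  rintro ⟨m, e, hm, hs, h0, hc, hd, heq⟩
  obtain ⟨k, rfl⟩ : ∃ k, m = k + 1 := ⟨m - 1, by omega⟩
  have hb := cf_bounds k e hs hc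
  generalize cfNum (cfEntries (k + 1) e) = p at *
  generalize cfDen (cfEntries (k + 1) e) = q at *
  have hn' : (2 : ℚ) ≤ n := by exact_mod_cast hn
  have hgt : (2 : ℚ) < (2 * (n : ℚ) ^ 2 + 1) / (2 * n) := by
    rw [lt_div_iff₀ (by linarith)]
    nlinarith
  have hle : (p : ℚ) / q ≤ 2 := by
    have h1 := hs 1 (by omega)
    have key : (0 < q ∧ p ≤ 2 * q) ∨ (q < 0 ∧ 2 * q ≤ p) := by
      rcases h1 with h1 | h1 <;> simp only [h0, h1] at hb <;> omega
    rcases key with ⟨hq, hp⟩ | ⟨hq, hp⟩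
    · rw [div_le_iff₀ (by exact_mod_cast hq)]
      exact_mod_cast hp
    · rw [div_le_iff_of_neg (by exact_mod_cast hq)]
      exact_mod_cast hp
  linarith
end

section
/- Let α be an odd positive integer and let β, β' be integers such that β² ≡ 2ε (mod α) and β'² ≡ 2ε' (mod α) for some ε, ε' ∈ {−1, 1}, and β·β' ≡ 1 (mod α) or β·β' ≡ −1 (mod α). Then α = 1 or α = 3. -/
/-! Multiplying the first two congruences and squaring the third gives `4εε' ≡ (ββ')² ≡ 1 (mod α)`,
so `α` divides `3` or `5`. The value `α = 5` is impossible because `±2` is not a square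
modulo `5`. -/

theorem stmt17 (α : ℤ) (hα : 0 < α) (hαodd : Odd α) (β β' ε ε' : ℤ)
    (hε : ε = 1 ∨ ε = -1) (hε' : ε' = 1 ∨ ε' = -1)
    (h1 : β ^ 2 ≡ 2 * ε [ZMOD α]) (h2 : β' ^ 2 ≡ 2 * ε' [ZMOD α])
    (h3 : β * β' ≡ 1 [ZMOD α] ∨ β * β' ≡ -1 [ZMOD α]) :
    α = 1 ∨ α = 3 := by
  have hsq : (β * β') ^ 2 ≡ 1 [ZMOD α] := by
    rcases h3 with h | h <;> simpa using h.pow 2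
  have h4 : 1 ≡ 2 * ε * (2 * ε') [ZMOD α] := by
    have h := h1.mul h2
    rw [← mul_pow] at h
    exact hsq.symm.trans h
  have hdvd : α ∣ 3 ∨ α ∣ 5 := by
    have h := h4.dvd
    rcases hε with rfl | rfl <;> rcases hε' with rfl | rfl <;> norm_num at h <;> simp [h]
  have hle : α ≤ 5 := by
    rcases hdvd with h | h
    · exact (Int.le_of_dvd (by norm_num) h).trans (by norm_num)
    · exact Int.le_of_dvd (by norm_num) h
  have h5 : α ≠ 5 := by
    rintro rfl
    have hβ : β % 5 = 0 ∨ β % 5 = 1 ∨ β % 5 = 2 ∨ β % 5 = 3 ∨ β % 5 = 4 := by omega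
    rcases hε with rfl | rfl <;> rcases hβ with h | h | h | h | h <;>
      simp [Int.ModEq, pow_two, Int.mul_emod, h] at h1
  interval_cases α <;> omega
end

section
/- Let n be a positive integer. There exist β ∈ {2, n, n+1} and ε ∈ {−1, 1} with β² ≡ 2ε (mod 2n+1) if and only if n ∈ {1, 3, 4}. -/
/-!
Put `m = 2n + 1`. If `β = 2`, the congruence says that `m` divides `4 - 2ε`, which is `2` or `6`.
If `β` is `n` or `n + 1`, then `2β ≡ ±1 (mod m)`, so multiplying the congruence by `4` gives
`1 ≡ 8ε (mod m)`, and `m` divides `7` or `9`. As `m` is odd and greater than `1`, it is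
`3`, `7` or `9`. Conversely `2² ≡ -2 (mod 3)`, `3² ≡ 2 (mod 7)` and `4² ≡ -2 (mod 9)`.
-/

theorem stmt18 (n : ℕ) (hn : 0 < n) :
    (∃ β ε : ℤ, (β = 2 ∨ β = (n : ℤ) ∨ β = (n : ℤ) + 1) ∧
      (ε = 1 ∨ ε = -1) ∧ β ^ 2 ≡ 2 * ε [ZMOD (2 * (n : ℤ) + 1)]) ↔
    n = 1 ∨ n = 3 ∨ n = 4 := by
  constructor
  · rintro ⟨β, ε, hβ, hε, h⟩
    obtain ⟨k, hk⟩ := h.dvd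
    have key : (2 * (n : ℤ) + 1) ∣ 4 - 2 * ε ∨ (2 * (n : ℤ) + 1) ∣ 8 * ε - 1 := by
      rcases hβ with rfl | rfl | rfl
      · exact Or.inl ⟨-k, by linarith⟩
      -- `8ε - 1 = 4(2ε - β²) + (2β - 1)(2β + 1)`, and one of the last two factors is `2n + 1`.
      · exact Or.inr ⟨4 * k + 2 * n - 1, by linear_combination 4 * hk⟩
      · exact Or.inr ⟨4 * k + 2 * n + 3, by linear_combination 4 * hk⟩
    have hle : n ≤ 4 := by
      rcases hε with rfl | rfl <;> rcases key with h | h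
      · have := Int.le_of_dvd (by norm_num) h
        omega
      · have := Int.le_of_dvd (by norm_num) h
        omega
      · have := Int.le_of_dvd (by norm_num) h
        omega
      · have := Int.le_of_dvd (by norm_num) ((dvd_neg).mpr h)
        omega
    rcases hε with rfl | rfl <;> interval_cases n <;> revert key <;> norm_num
  · rintro (rfl | rfl | rfl)
    · exact ⟨2, -1, by norm_num, by norm_num, by decide⟩
    · exact ⟨3, 1, by norm_num, by norm_num, by decide⟩
    · exact ⟨4, -1, by norm_num, by norm_num, by decide⟩
end
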